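/- Let h : (0,∞)² → ℝ be continuous and piecewise generalized polynomial. Then there exist L ∈ ℕ, real numbers 0 = γ_0 < γ_1 < … < γ_L < γ_{L+1} = ∞, and functions d_0, d_1, …, d_L : (0,∞)² → ℝ, each a pointwise supremum of infima of finitely many generalized polynomial functions, such that for each p ∈ {0,…,L}, d_p coincides with h on the vertical half-strip H_p := (γ_p, γ_{p+1}) × (0,∞). -/

import Mathlib

open Set

noncomputable section

/-- The open positive quadrant `(0,∞)²`, as a subtype of `ℝ × ℝ`. -/
abbrev PQ : Type := {p : ℝ × ℝ // 0 < p.1 ∧ 0 < p.2}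

/-- A generalized polynomial function (signomial) of two variables: a finite sum
`∑ cᵢ x^{αᵢ₁} y^{αᵢ₂}` with nonzero real coefficients and distinct real exponent pairs. -/
def IsGenPoly (a : PQ → ℝ) : Prop :=
  ∃ (m : ℕ) (c : Fin m → ℝ) (α : Fin m → ℝ × ℝ),
    (∀ i, c i ≠ 0) ∧ Function.Injective α ∧
    ∀ p : PQ, a p = ∑ i, c i * p.1.1 ^ (α i).1 * p.1.2 ^ (α i).2

/-- A basic generalized semialgebraic (semisignomial) subset of `(0,∞)²`. -/
def IsBasicGSA (S : Set PQ) : Prop :=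
  ∃ (f : PQ → ℝ) (K : ℕ) (g : Fin K → PQ → ℝ),
    IsGenPoly f ∧ (∀ k, IsGenPoly (g k)) ∧
    S = {p : PQ | f p = 0 ∧ ∀ k, 0 < g k p}

/-- A generalized semialgebraic set: a finite union of basic ones. -/
def IsGSA (S : Set PQ) : Prop :=
  ∃ (J : ℕ) (T : Fin J → Set PQ), (∀ j, IsBasicGSA (T j)) ∧ S = ⋃ j, T j

/-- `h` is piecewise generalized polynomial: there are finitely many *distinct*
generalized polynomial functions `g i` whose agreement sets with `h` are
generalized semialgebraic and cover `(0,∞)²`. -/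
def IsPiecewiseGenPoly (h : PQ → ℝ) : Prop :=
  ∃ (l : ℕ) (g : Fin l → PQ → ℝ),
    (∀ i, IsGenPoly (g i)) ∧ Function.Injective g ∧
    (∀ i, IsGSA {p : PQ | h p = g i p}) ∧
    ∀ p : PQ, ∃ i, h p = g i p

/-- `h` is a pointwise sup of infs of finitely many generalized polynomial functions. -/
def IsSupInf (h : PQ → ℝ) : Prop :=
  ∃ (J : ℕ) (K : Fin (J + 1) → ℕ)
    (f : (j : Fin (J + 1)) → Fin (K j + 1) → PQ → ℝ),
    (∀ j k, IsGenPoly (f j k)) ∧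
    ∀ p : PQ, h p = ⨆ j, ⨅ k, f j k p

/-- The `p`-th interval of the subdivision `0 = γ 0 < γ 1 < … < γ L < γ (L+1) = ∞`
of `(0,∞)`: it is `(γ p, γ (p+1))` for `p < L` and `(γ L, ∞)` for `p = L`. -/
def vstrip (γ : ℕ → ℝ) (L p : ℕ) : Set ℝ :=
  if p = L then Set.Ioi (γ p) else Set.Ioo (γ p) (γ (p + 1))

section P1
lemma qr_mono {g g1 : ℝ → ℝ} {b B t1 t2 y : ℝ} (hb : 0 < b) (hB : 0 ≤ B) (h1 : 0 < t1)
    (h12 : t1 ≤ t2) (h2 : t2 ≤ y)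
    (hd : ∀ t, 0 < t → HasDerivAt g (t ^ (b - 1) * g1 t) t)
    (hg : ∀ t, t1 ≤ t → t ≤ t2 → g1 t ≤ B) : g t2 ≤ g t1 + y ^ b / b * B := by
  have hd2 : ∀ t, 0 < t → HasDerivAt (fun t => B * t ^ b / b - g t)
      (t ^ (b - 1) * (B - g1 t)) t := by
    intro t ht
    have := ((((Real.hasDerivAt_rpow_const (p := b) (Or.inl ht.ne')).const_mul B).div_const b).sub
      (hd t ht))
    refine HasDerivAt.congr_deriv this ?_
    have := hb.ne'
    field_simp
  have hm : MonotoneOn (fun t => B * t ^ b / b - g t) (Icc t1 t2) := by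
    apply monotoneOn_of_deriv_nonneg (convex_Icc _ _)
    · intro t ht
      exact (hd2 t (h1.trans_le ht.1)).continuousAt.continuousWithinAt
    · intro t ht
      rw [interior_Icc] at ht
      exact (hd2 t (h1.trans ht.1)).differentiableAt.differentiableWithinAt
    · intro t ht
      rw [interior_Icc] at ht
      rw [(hd2 t (h1.trans ht.1)).deriv]
      exact mul_nonneg (Real.rpow_nonneg (h1.trans ht.1).le _) (sub_nonneg.2 (hg t ht.1.le ht.2.le))
  have h := hm (left_mem_Icc.2 h12) (right_mem_Icc.2 h12) h12
  simp only at h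
  have h3 : t2 ^ b ≤ y ^ b := Real.rpow_le_rpow (h1.le.trans h12) h2 hb.le
  have h4 : 0 ≤ t1 ^ b := Real.rpow_nonneg h1.le _
  have h5 : B * t2 ^ b / b ≤ y ^ b / b * B := by
    rw [div_mul_eq_mul_div, mul_comm]
    gcongr
  have h6 : 0 ≤ B * t1 ^ b / b := by positivity
  linarith

/-- recursive bound -/
def Bd (G : ℕ → ℝ → ℝ) (b : ℕ → ℝ) (z y : ℝ) : ℕ → ℕ → ℝ
  | 0, _ => 0
  | n + 1, l => (if SignType.sign (G l z) = SignType.sign (G l y) then 0 else |G l y|)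
      + 2 * (y ^ b l / b l) * Bd G b z y n (l + 1)

lemma Bd_nonneg (G : ℕ → ℝ → ℝ) (b : ℕ → ℝ) (hb : ∀ l, 0 < b l) {z y : ℝ} (hy : 0 < y)
    (n l : ℕ) : 0 ≤ Bd G b z y n l := by
  induction n generalizing l with
  | zero => simp [Bd]
  | succ n ih =>
    rw [Bd]
    have := hb l
    have := ih (l + 1)
    split_ifs <;> positivity

lemma qr_R (b : ℕ → ℝ) (hb : ∀ l, 0 < b l) {z y : ℝ} (hz : 0 < z) (hzy : z ≤ y) (n : ℕ) :
    ∀ (G : ℕ → ℝ → ℝ) (l : ℕ),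
    (∀ l t, 0 < t → HasDerivAt (G l) (t ^ (b l - 1) * G (l + 1) t) t) →
    (∀ k, l + n ≤ k → ∀ t, 0 < t → G k t = 0) →
    (∀ t, z ≤ t → t ≤ y → -Bd G b z y n l ≤ G l t) ∨ (∀ t, z ≤ t → t ≤ y → G l t ≤ Bd G b z y n l) := by
  induction n with
  | zero =>
    intro G l hd h0
    left
    intro t h1 h2
    rw [h0 l (by simp) t (hz.trans_le h1)]; simp [Bd]
  | succ n ih =>
    have key : ∀ (G : ℕ → ℝ → ℝ) (l : ℕ),
      (∀ l t, 0 < t → HasDerivAt (G l) (t ^ (b l - 1) * G (l + 1) t) t) →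
      (∀ t, z ≤ t → t ≤ y → G (l+1) t ≤ Bd G b z y n (l+1)) →
      (∀ t, z ≤ t → t ≤ y → -Bd G b z y (n+1) l ≤ G l t) ∨ (∀ t, z ≤ t → t ≤ y → G l t ≤ Bd G b z y (n+1) l) := by
      intro G l hd h
      have hBn := Bd_nonneg G b hb (z := z) (hz.trans_le hzy) n (l+1)
      have hw : 0 < y ^ b l / b l := div_pos (Real.rpow_pos_of_pos (hz.trans_le hzy) _) (hb l)
      have hmv : ∀ t1 t2, z ≤ t1 → t1 ≤ t2 → t2 ≤ y → G l t2 ≤ G l t1 + y ^ b l / b l * Bd G b z y n (l+1) := by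
        intro t1 t2 h1 h12 h2
        exact qr_mono (hb l) hBn (hz.trans_le h1) h12 h2 (hd l) (fun t ht ht' => h t (h1.trans ht) (ht'.trans h2))
      have hp := mul_nonneg hw.le hBn
      rw [Bd]
      by_cases hGz : G l z ≤ 0
      · right
        intro t h1 h2
        have := hmv z t le_rfl h1 h2
        split_ifs
        · linarith
        · have := abs_nonneg (G l y); linarith
      · push Not at hGz
        left
        intro t h1 h2
        have := hmv t y h1 h2 le_rfl
        split_ifs with hs
        · rw [sign_pos hGz] at hs
          have := sign_eq_one_iff.1 hs.symm
          linarith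
        · have := neg_abs_le (G l y); linarith
    intro G l hd h0
    rcases ih G (l+1) hd (fun k hk => h0 k (by omega)) with h | h
    · have hneg : ∀ n l, Bd (fun l t => - G l t) b z y n l = Bd G b z y n l := by
        intro n
        induction n with
        | zero => intro l; rfl
        | succ n ih2 =>
          intro l
          simp only [Bd, ih2, Left.sign_neg, neg_inj, abs_neg]
      have := key (fun l t => - G l t) l (fun l t ht => by
        have := (hd l t ht).fun_neg
        simpa using this) (fun t h1 h2 => by rw [hneg]; have := h t h1 h2; linarith)
      rw [hneg] at this
      rcases this with h | h
      · right; intro t h1 h2; have := h t h1 h2; linarith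
      · left; intro t h1 h2; have := h t h1 h2; linarith
    · exact key G l hd h

lemma qr_Q (b : ℕ → ℝ) (hb : ∀ l, 0 < b l) {z y : ℝ} (hz : 0 < z) (hzy : z ≤ y) (n : ℕ) :
    ∀ (G : ℕ → ℝ → ℝ) (l : ℕ),
    (∀ l t, 0 < t → HasDerivAt (G l) (t ^ (b l - 1) * G (l + 1) t) t) →
    (∀ k, l + n ≤ k → ∀ t, 0 < t → G k t = 0) →
    (∃ t, z ≤ t ∧ t ≤ y ∧ G l t = 0) → |G l y| ≤ Bd G b z y n l := by
  induction n with
  | zero =>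
    intro G l hd h0 _
    rw [h0 l (by simp) y (hz.trans_le hzy)]; simp [Bd]
  | succ n ih =>
    have hy := hz.trans_le hzy
    have key : ∀ (G : ℕ → ℝ → ℝ) (l : ℕ),
      (∀ l t, 0 < t → HasDerivAt (G l) (t ^ (b l - 1) * G (l + 1) t) t) →
      (∀ k, l + (n+1) ≤ k → ∀ t, 0 < t → G k t = 0) →
      (∃ t, z ≤ t ∧ t ≤ y ∧ G l t = 0) → 0 < G l z → 0 < G l y → G l y ≤ Bd G b z y (n+1) l := by
      intro G l hd h0 ⟨t0, ht0, ht0', hG0⟩ hGz hGy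
      have hBn := Bd_nonneg G b hb (z := z) hy n (l+1)
      obtain ⟨m, hm, hmin⟩ := (isCompact_Icc (a := z) (b := y)).exists_isMinOn
        (nonempty_Icc.2 hzy) (f := G l) (fun t ht => (hd l t (hz.trans_le ht.1)).continuousAt.continuousWithinAt)
      have hGm : G l m ≤ 0 := hG0 ▸ hmin (show t0 ∈ Icc z y from ⟨ht0, ht0'⟩)
      have hzm : z < m := lt_of_le_of_ne hm.1 (by rintro rfl; linarith)
      have hmy : m < y := lt_of_le_of_ne hm.2 (by rintro rfl; linarith)
      have hm0 : 0 < m := hz.trans hzm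
      have hloc : IsLocalMin (G l) m := hmin.isLocalMin (Icc_mem_nhds hzm hmy)
      have hder := hloc.hasDerivAt_eq_zero (hd l m hm0)
      have hG1 : G (l+1) m = 0 := by
        rcases mul_eq_zero.1 hder with h | h
        · exact absurd h (Real.rpow_pos_of_pos hm0 _).ne'
        · exact h
      have hQ1 := ih G (l+1) hd (fun k hk => h0 k (by omega)) ⟨m, hm.1, hm.2, hG1⟩
      have hup : ∀ t, m ≤ t → t ≤ y → G (l+1) t ≤ 2 * Bd G b z y n (l+1) := by
        cases n with
        | zero =>
          intro t h1 h2
          rw [h0 (l+1) (by omega) t (hm0.trans_le h1)]; simp [Bd]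
        | succ n =>
          have hBn2 := Bd_nonneg G b hb (z := z) hy n (l+2)
          have hw : 0 < y ^ b (l+1) / b (l+1) := div_pos (Real.rpow_pos_of_pos hy _) (hb _)
          have hle : y ^ b (l+1) / b (l+1) * Bd G b z y n (l+2) ≤ Bd G b z y (n+1) (l+1) := by
            have hp := mul_nonneg hw.le hBn2
            rw [Bd]
            split_ifs
            · linarith
            · have := abs_nonneg (G (l+1) y); linarith
          rcases qr_R b hb hz hzy n G (l+2) hd (fun k hk => h0 k (by omega)) with h | h
          · intro t h1 h2
            have := qr_mono (g := fun t => - G (l+1) t) (g1 := fun t => - G (l+2) t) (hb (l+1)) hBn2 (hm0.trans_le h1) h2 le_rfl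
              (fun t ht => by
                have := (hd (l+1) t ht).fun_neg
                simpa using this) (fun t ht ht' => by have := h t (hm.1.trans (h1.trans ht)) ht'; linarith)
            have := le_abs_self (G (l+1) y)
            linarith
          · intro t h1 h2
            have := qr_mono (hb (l+1)) hBn2 hm0 h1 h2 (hd (l+1)) (fun t ht ht' => h t (hm.1.trans ht) (ht'.trans h2))
            linarith
      have := qr_mono (hb l) (by positivity) hm0 hmy.le le_rfl (hd l) hup
      rw [Bd]
      split_ifs
      · linarith
      · have := abs_nonneg (G l y); linarith
    intro G l hd h0 hex
    have hBn := Bd_nonneg G b hb (z := z) hy n (l+1)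
    have hw : 0 < y ^ b l / b l := div_pos (Real.rpow_pos_of_pos hy _) (hb _)
    by_cases hs : SignType.sign (G l z) = SignType.sign (G l y)
    · rcases lt_trichotomy (G l y) 0 with h | h | h
      · have hneg : ∀ n l, Bd (fun l t => - G l t) b z y n l = Bd G b z y n l := by
          intro n
          induction n with
          | zero => intro l; rfl
          | succ n ih2 =>
            intro l
            simp only [Bd, ih2, Left.sign_neg, neg_inj, abs_neg]
        rw [sign_neg h] at hs
        have hz' := sign_eq_neg_one_iff.1 hs
        have := key (fun l t => - G l t) l (fun l t ht => by
          have := (hd l t ht).fun_neg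
          simpa using this) (fun k hk t ht => by simp [h0 k hk t ht])
          (by obtain ⟨t, h1, h2, h3⟩ := hex; exact ⟨t, h1, h2, by simp [h3]⟩) (by linarith) (by linarith)
        rw [hneg] at this
        rw [abs_of_neg h]; exact this
      · rw [h, abs_zero]; exact Bd_nonneg G b hb hy _ _
      · rw [sign_pos h] at hs
        have hz' := sign_eq_one_iff.1 hs
        rw [abs_of_pos h]
        exact key G l hd h0 hex hz' h
    · rw [Bd, if_neg hs]
      have := mul_nonneg hw.le hBn
      linarith

end P1

section P2a
def IsH (θ : ℝ) (v : ℝ → ℝ) : Prop :=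
  ∃ (ι : Type) (a e : ι → ℝ) (ε : ℝ), 0 < ε ∧ (∀ i, θ ≤ e i) ∧ (∀ M, {i | e i ≤ M}.Finite) ∧
    Summable (fun i => |a i| * ε ^ (e i)) ∧
    ∀ x, 0 < x → x ≤ ε → HasSum (fun i => a i * x ^ (e i)) (v x)

lemma summ_shrink {ι : Type} {a e : ι → ℝ} {ε ε' θ : ℝ} (h0 : 0 ≤ θ) (he : ∀ i, θ ≤ e i)
    (h' : 0 < ε') (hle : ε' ≤ ε) (hs : Summable (fun i => |a i| * ε ^ (e i))) :
    Summable (fun i => |a i| * ε' ^ (e i)) := by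
  refine Summable.of_nonneg_of_le (fun i => by positivity) (fun i => ?_) hs
  exact mul_le_mul_of_nonneg_left (Real.rpow_le_rpow h'.le hle (h0.trans (he i))) (abs_nonneg _)

lemma IsH.congr {θ : ℝ} {v w : ℝ → ℝ} {δ : ℝ} (h0 : 0 ≤ θ) (hv : IsH θ v) (hδ : 0 < δ)
    (h : ∀ x, 0 < x → x ≤ δ → v x = w x) : IsH θ w := by
  obtain ⟨ι, a, e, ε, hε, he, hf, hs, hh⟩ := hv
  refine ⟨ι, a, e, min ε δ, lt_min hε hδ, he, hf,
    summ_shrink h0 he (lt_min hε hδ) (min_le_left _ _) hs, fun x hx hx' => ?_⟩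
  rw [← h x hx (hx'.trans (min_le_right _ _))]
  exact hh x hx (hx'.trans (min_le_left _ _))

lemma IsH.mono {θ θ' : ℝ} {v : ℝ → ℝ} (hle : θ' ≤ θ) (hv : IsH θ v) : IsH θ' v := by
  obtain ⟨ι, a, e, ε, hε, he, hf, hs, hh⟩ := hv
  exact ⟨ι, a, e, ε, hε, fun i => hle.trans (he i), hf, hs, hh⟩

lemma IsH.add {θ : ℝ} {v w : ℝ → ℝ} (h0 : 0 ≤ θ) (hv : IsH θ v) (hw : IsH θ w) :
    IsH θ (v + w) := by
  obtain ⟨ι, a, e, ε, hε, he, hf, hs, hh⟩ := hv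
  obtain ⟨ι', a', e', ε', hε', he', hf', hs', hh'⟩ := hw
  have hm := lt_min hε hε'
  refine ⟨ι ⊕ ι', Sum.elim a a', Sum.elim e e', min ε ε', hm, ?_, ?_, ?_, ?_⟩
  · rintro (i | i)
    · exact he i
    · exact he' i
  · intro M
    refine (((hf M).image Sum.inl).union ((hf' M).image Sum.inr)).subset ?_
    rintro (i | i) hi
    · exact Or.inl ⟨i, hi, rfl⟩
    · exact Or.inr ⟨i, hi, rfl⟩
  · apply Summable.sum
    · exact summ_shrink h0 he hm (min_le_left _ _) hs
    · exact summ_shrink h0 he' hm (min_le_right _ _) hs'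
  · intro x hx hx'
    exact HasSum.sum (f := fun i => Sum.elim a a' i * x ^ (Sum.elim e e' i))
      (hh x hx (hx'.trans (min_le_left _ _))) (hh' x hx (hx'.trans (min_le_right _ _)))

lemma IsH.mul {θ θ' : ℝ} {v w : ℝ → ℝ} (h0 : 0 ≤ θ) (h0' : 0 ≤ θ') (hv : IsH θ v) (hw : IsH θ' w) :
    IsH (θ + θ') (v * w) := by
  obtain ⟨ι, a, e, ε, hε, he, hf, hs, hh⟩ := hv
  obtain ⟨ι', a', e', ε', hε', he', hf', hs', hh'⟩ := hw
  have hm := lt_min hε hε'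
  have s1 := summ_shrink h0 he hm (min_le_left _ _) hs
  have s2 := summ_shrink h0' he' hm (min_le_right _ _) hs'
  refine ⟨ι × ι', fun p => a p.1 * a' p.2, fun p => e p.1 + e' p.2, min ε ε', hm, ?_, ?_, ?_, ?_⟩
  · rintro ⟨i, j⟩
    exact add_le_add (he i) (he' j)
  · intro M
    refine ((hf (M - θ')).prod (hf' (M - θ))).subset ?_
    rintro ⟨i, j⟩ hij
    have := he i
    have := he' j
    simp only [mem_ofPred_eq] at hij
    constructor <;> simp only [mem_ofPred_eq] <;> linarith
  · refine (s1.mul_of_nonneg s2 (fun i => by positivity) (fun i => by positivity)).congr ?_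
    rintro ⟨i, j⟩
    simp only [abs_mul, Real.rpow_add hm]; ring
  · intro x hx hx'
    have k1 := hh x hx (hx'.trans (min_le_left _ _))
    have k2 := hh' x hx (hx'.trans (min_le_right _ _))
    have t1 := summ_shrink h0 he hx hx' s1
    have t2 := summ_shrink h0' he' hx hx' s2
    have n1 : Summable fun i => ‖a i * x ^ e i‖ := by
      refine t1.congr fun i => ?_
      rw [norm_mul, Real.norm_eq_abs, Real.norm_eq_abs, abs_of_nonneg (Real.rpow_nonneg hx.le _)]
    have n2 : Summable fun i => ‖a' i * x ^ e' i‖ := by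
      refine t2.congr fun i => ?_
      rw [norm_mul, Real.norm_eq_abs, Real.norm_eq_abs, abs_of_nonneg (Real.rpow_nonneg hx.le _)]
    have hfe : (fun p : ι × ι' => a p.1 * a' p.2 * x ^ (e p.1 + e' p.2)) =
        fun p : ι × ι' => (a p.1 * x ^ e p.1) * (a' p.2 * x ^ e' p.2) := by
      funext p
      rw [Real.rpow_add hx]; ring
    show HasSum (fun p : ι × ι' => a p.1 * a' p.2 * x ^ (e p.1 + e' p.2)) (v x * w x)
    rw [hfe]
    have hsm := summable_mul_of_summable_norm (f := fun i => a i * x ^ e i) (g := fun i => a' i * x ^ e' i) n1 n2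
    exact HasSum.mul (f := fun i => a i * x ^ e i) (g := fun i => a' i * x ^ e' i) k1 k2 hsm

lemma IsH.cpow (c δ : ℝ) : IsH δ (fun x => c * x ^ δ) := by
  refine ⟨Unit, fun _ => c, fun _ => δ, 1, one_pos, fun _ => le_rfl, fun _ => Set.toFinite _, Summable.of_finite, ?_⟩
  intro x hx hx'
  exact hasSum_unique _

lemma IsH.const (c : ℝ) : IsH 0 (fun _ => c) := by
  simpa using IsH.cpow c 0

lemma IsH.zero (θ : ℝ) : IsH θ (fun _ => 0) := by
  refine ⟨Empty, Empty.elim, Empty.elim, 1, one_pos, fun i => i.elim, fun _ => Set.toFinite _, Summable.of_finite, ?_⟩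
  intro x hx hx'
  exact hasSum_empty

/-- tail bound -/
lemma tail_bound {ι : Type} {a e : ι → ℝ} {ε θ x s : ℝ} (he : ∀ i, a i = 0 ∨ θ ≤ e i)
    (hε : 0 < ε) (hs : Summable (fun i => |a i| * ε ^ (e i)))
    (hx : 0 < x) (hxe : x ≤ ε) (hh : HasSum (fun i => a i * x ^ (e i)) s) :
    |s| ≤ (x / ε) ^ θ * ∑' i, |a i| * ε ^ (e i) := by
  have key : ∀ i, ‖a i * x ^ (e i)‖ ≤ (x / ε) ^ θ * (|a i| * ε ^ (e i)) := by
    intro i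
    rcases he i with h | h
    · simp [h]
    have hxx : x / ε ≤ 1 := (div_le_one hε).2 hxe
    have hx0 : 0 < x / ε := div_pos hx hε
    rw [norm_mul, Real.norm_eq_abs, Real.norm_eq_abs, abs_of_nonneg (Real.rpow_nonneg hx.le _)]
    have : x ^ e i = (x / ε) ^ e i * ε ^ e i := by
      rw [← Real.mul_rpow hx0.le hε.le, div_mul_cancel₀ _ hε.ne']
    rw [this]
    have h2 := Real.rpow_le_rpow_of_exponent_ge hx0 hxx h
    have h3 : 0 ≤ |a i| * ε ^ e i := by positivity
    nlinarith
  rw [← hh.tsum_eq, ← tsum_mul_left]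
  exact tsum_of_norm_bounded (hs.mul_left _).hasSum key

lemma IsH.bound {θ : ℝ} {v : ℝ → ℝ} (hv : IsH θ v) :
    ∃ ε > 0, ∃ C ≥ 0, ∀ x, 0 < x → x ≤ ε → |v x| ≤ C * x ^ θ := by
  obtain ⟨ι, a, e, ε, hε, he, hf, hs, hh⟩ := hv
  refine ⟨ε, hε, (∑' i, |a i| * ε ^ (e i)) / ε ^ θ, ?_, fun x hx hx' => ?_⟩
  · exact div_nonneg (tsum_nonneg fun i => by positivity) (by positivity)
  · have := tail_bound (fun i => Or.inr (he i)) hε hs hx hx' (hh x hx hx')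
    rw [Real.div_rpow hx.le hε.le] at this
    refine this.trans_eq ?_
    ring

lemma IsH.order {v : ℝ → ℝ} (hv : IsH 0 v) :
    (∃ ε > 0, ∀ x, 0 < x → x ≤ ε → v x = 0) ∨
    (∃ ε > 0, ∃ c > 0, ∃ ν : ℝ, ∀ x, 0 < x → x ≤ ε → c * x ^ ν ≤ |v x|) := by
  classical
  obtain ⟨ι, a, e, ε, hε, he, hf, hs, hh⟩ := hv
  set S := ∑' i, |a i| * ε ^ (e i) with hS
  -- split
  have split : ∀ M, 0 ≤ M → ∀ x, 0 < x → x ≤ ε →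
      |v x - ∑ i ∈ (hf M).toFinset, a i * x ^ (e i)| ≤ (x / ε) ^ M * S := by
    intro M hM x hx hx'
    set a' : ι → ℝ := fun i => if e i ≤ M then 0 else a i with ha'
    have hle : ∀ i, |a' i| * ε ^ e i ≤ |a i| * ε ^ e i := by
      intro i
      simp only [ha']
      split_ifs
      · simp; positivity
      · exact le_rfl
    have hs' : Summable (fun i => |a' i| * ε ^ (e i)) :=
      Summable.of_nonneg_of_le (fun i => by positivity) hle hs
    have h1 : HasSum (fun i => (if e i ≤ M then a i * x ^ e i else 0)) (∑ i ∈ (hf M).toFinset, a i * x ^ (e i)) := by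
      have : ∑ i ∈ (hf M).toFinset, a i * x ^ (e i) = ∑ i ∈ (hf M).toFinset, (if e i ≤ M then a i * x ^ e i else 0) := by
        refine Finset.sum_congr rfl fun i hi => ?_
        rw [if_pos (by simpa using hi)]
      rw [this]
      apply hasSum_sum_of_ne_finset_zero
      intro i hi
      rw [if_neg (by simpa using hi)]
    have h2 : HasSum (fun i => a' i * x ^ (e i)) (v x - ∑ i ∈ (hf M).toFinset, a i * x ^ (e i)) := by
      have := (hh x hx hx').sub h1
      have hfe : (fun i => a' i * x ^ (e i)) = fun i => a i * x ^ e i - (if e i ≤ M then a i * x ^ e i else 0) := by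
        funext i
        by_cases h : e i ≤ M <;> simp [ha', h]
      rw [hfe]; exact this
    refine (tail_bound (θ := M) (fun i => ?_) hε hs' hx hx' h2).trans ?_
    · simp only [ha']
      split_ifs with h
      · left; rfl
      · right; linarith
    · exact mul_le_mul_of_nonneg_left (hs'.tsum_le_tsum hle hs) (by positivity)
  have hS0 : 0 ≤ S := tsum_nonneg fun i => by positivity
  -- fiber sums
  let fs : ℝ → ℝ := fun μ => ∑ i ∈ (hf μ).toFinset with e i = μ, a i
  have fsM : ∀ M x, 0 < x → ∑ i ∈ (hf M).toFinset, a i * x ^ (e i) =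
      ∑ μ ∈ (hf M).toFinset.image e, fs μ * x ^ μ := by
    intro M x hx
    rw [← Finset.sum_fiberwise_of_maps_to (g := e) (t := (hf M).toFinset.image e) (fun i hi => Finset.mem_image_of_mem e hi)]
    refine Finset.sum_congr rfl fun μ hμ => ?_
    simp only [fs]
    rw [Finset.sum_mul]
    obtain ⟨i0, hi0, rfl⟩ := Finset.mem_image.1 hμ
    simp only [Finite.mem_toFinset, mem_ofPred_eq] at hi0
    refine Finset.sum_congr ?_ ?_
    · ext i
      simp only [Finset.mem_filter, Finite.mem_toFinset, mem_ofPred_eq]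
      constructor
      · rintro ⟨h1, h2⟩; exact ⟨h2.le, h2⟩
      · rintro ⟨h1, h2⟩; exact ⟨by rw [h2]; exact hi0, h2⟩
    · intro i hi
      rw [(Finset.mem_filter.1 hi).2]
  by_cases hall : ∀ μ, fs μ = 0
  · left
    refine ⟨ε / 2, by positivity, fun x hx hx' => ?_⟩
    have hb : ∀ n : ℕ, |v x| ≤ (x / ε) ^ n * S := by
      intro n
      have := split n (Nat.cast_nonneg n) x hx (by linarith)
      rw [fsM _ _ hx, Finset.sum_eq_zero (fun μ _ => by rw [hall, zero_mul]), sub_zero, Real.rpow_natCast] at this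
      exact this
    have hlim : Filter.Tendsto (fun n : ℕ => (x / ε) ^ n * S) Filter.atTop (nhds (0 * S)) :=
      (tendsto_pow_atTop_nhds_zero_of_lt_one (by positivity) (by rw [div_lt_one hε]; linarith)).mul_const _
    rw [zero_mul] at hlim
    have := ge_of_tendsto' hlim hb
    exact abs_nonpos_iff.1 this
  · right
    push Not at hall
    obtain ⟨μ1, hμ1⟩ := hall
    have hne1 : ((hf μ1).toFinset.image e |>.filter (fun μ => fs μ ≠ 0)).Nonempty := by
      have : ∃ i ∈ (hf μ1).toFinset.filter (fun i => e i = μ1), a i ≠ 0 := Finset.exists_ne_zero_of_sum_ne_zero hμ1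
      obtain ⟨i, hi, _⟩ := this
      obtain ⟨h1, h2⟩ := Finset.mem_filter.1 hi
      exact ⟨μ1, Finset.mem_filter.2 ⟨Finset.mem_image.2 ⟨i, h1, h2⟩, hμ1⟩⟩
    set μ0 := Finset.min' _ hne1 with hμ0
    have hm0 := Finset.min'_mem _ hne1
    rw [← hμ0] at hm0
    obtain ⟨hm1, hm2⟩ := Finset.mem_filter.1 hm0
    have hμ0' : 0 ≤ μ0 := by
      obtain ⟨i, _, hi⟩ := Finset.mem_image.1 hm1
      rw [← hi]; exact he i
    have hle01 : μ0 ≤ μ1 := by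
      obtain ⟨i, hi, hi'⟩ := Finset.mem_image.1 hm1
      rw [← hi']; simpa using hi
    -- use M = μ0 + 1
    have hmin : ∀ μ ∈ (hf (μ0+1)).toFinset.image e, μ ≠ μ0 → fs μ = 0 ∨ μ0 < μ := by
      intro μ hμ hne
      by_contra! hcon
      obtain ⟨h1, h2⟩ := hcon
      have : μ0 ≤ μ := by
        apply Finset.min'_le
        refine Finset.mem_filter.2 ⟨?_, h1⟩
        obtain ⟨i, hi, hi'⟩ := Finset.mem_image.1 hμ
        refine Finset.mem_image.2 ⟨i, ?_, hi'⟩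
        simp only [Finite.mem_toFinset, mem_ofPred_eq]
        rw [hi']; linarith
      exact hne (le_antisymm h2 this)
    have hin : μ0 ∈ (hf (μ0+1)).toFinset.image e := by
      obtain ⟨i, hi, hi'⟩ := Finset.mem_image.1 hm1
      refine Finset.mem_image.2 ⟨i, ?_, hi'⟩
      simp only [Finite.mem_toFinset, mem_ofPred_eq]
      rw [hi']; linarith
    -- v x / x^μ0 → fs μ0
    have tend : Filter.Tendsto (fun x => (∑ μ ∈ ((hf (μ0+1)).toFinset.image e).erase μ0, |fs μ| * x ^ (μ - μ0)) + x * (S / ε ^ (μ0 + 1)))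
        (nhdsWithin 0 (Ioi 0)) (nhds (0 + 0 * (S / ε ^ (μ0 + 1)))) := by
      refine Filter.Tendsto.add ?_ ?_
      · rw [← Finset.sum_const_zero (s := ((hf (μ0+1)).toFinset.image e).erase μ0)]
        refine tendsto_finsetSum _ fun μ hμ => ?_
        obtain ⟨h1, h2⟩ := Finset.mem_erase.1 hμ
        rcases hmin μ h2 h1 with h | h
        · rw [h]; simp
        · have := (Real.continuousAt_rpow_const 0 (μ - μ0) (Or.inr (by linarith))).tendsto
          rw [Real.zero_rpow (by linarith)] at this
          simpa using (this.mono_left nhdsWithin_le_nhds).const_mul |fs μ|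
      · exact (Filter.Tendsto.mul_const _ Filter.tendsto_id).mono_left nhdsWithin_le_nhds
    have hpos : 0 < |fs μ0| / 2 := by have := abs_pos.2 hm2; linarith
    have hev := tend.eventually_lt_const (u := |fs μ0| / 2) (by simpa using hpos)
    obtain ⟨δ, hδ, hδ'⟩ := mem_nhdsGT_iff_exists_Ioc_subset.1 hev
    refine ⟨min δ ε, lt_min hδ hε, |fs μ0| / 2, hpos, μ0, fun x hx hx' => ?_⟩
    have h1 := hδ' ⟨hx, hx'.trans (min_le_left _ _)⟩
    simp only [mem_ofPred_eq] at h1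
    have h2 := split (μ0+1) (by linarith) x hx (hx'.trans (min_le_right _ _))
    rw [fsM _ _ hx, ← Finset.add_sum_erase _ _ hin] at h2
    have hxp : 0 < x ^ μ0 := Real.rpow_pos_of_pos hx _
    have h3 : |∑ μ ∈ ((hf (μ0+1)).toFinset.image e).erase μ0, fs μ * x ^ μ| ≤
        x ^ μ0 * ∑ μ ∈ ((hf (μ0+1)).toFinset.image e).erase μ0, |fs μ| * x ^ (μ - μ0) := by
      rw [Finset.mul_sum]
      refine (Finset.abs_sum_le_sum_abs _ _).trans (Finset.sum_le_sum fun μ _ => ?_)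
      rw [abs_mul, abs_of_pos (Real.rpow_pos_of_pos hx _), Real.rpow_sub hx]
      apply le_of_eq
      field_simp
    have h4 : (x / ε) ^ (μ0 + 1) * S = x ^ μ0 * (x * (S / ε ^ (μ0 + 1))) := by
      rw [Real.div_rpow hx.le hε.le, Real.rpow_add hx, Real.rpow_one]; ring
    rw [h4] at h2
    have h5 : |fs μ0 * x ^ μ0| = |fs μ0| * x ^ μ0 := by rw [abs_mul, abs_of_pos hxp]
    set Q := ∑ μ ∈ ((hf (μ0+1)).toFinset.image e).erase μ0, fs μ * x ^ μ
    have h6 : |fs μ0 * x ^ μ0| ≤ |v x| + |v x - (fs μ0 * x ^ μ0 + Q)| + |Q| := by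
      have : fs μ0 * x ^ μ0 = v x - (v x - (fs μ0 * x ^ μ0 + Q)) - Q := by ring
      calc |fs μ0 * x ^ μ0| = |v x - (v x - (fs μ0 * x ^ μ0 + Q)) - Q| := by rw [← this]
        _ ≤ |v x - (v x - (fs μ0 * x ^ μ0 + Q))| + |Q| := abs_sub _ _
        _ ≤ _ := by gcongr; exact abs_sub _ _
    have h7 := mul_lt_mul_of_pos_left h1 hxp
    rw [mul_add] at h7
    rw [h5] at h6
    nlinarith

/-- ring of `IsH 0` functions -/
def Hring : Subring (ℝ → ℝ) where
  carrier := {v | IsH 0 v}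
  mul_mem' := fun {a b} ha hb => by simpa using IsH.mul le_rfl le_rfl ha hb
  one_mem' := IsH.const 1
  add_mem' := fun {a b} ha hb => IsH.add le_rfl ha hb
  zero_mem' := IsH.zero 0
  neg_mem' := fun {a} ha => by
    have := IsH.mul le_rfl le_rfl (IsH.const (-1)) ha
    rw [add_zero] at this
    refine this.congr le_rfl one_pos fun x _ _ => ?_
    simp

lemma IsH.sum {K : Type} (s : Finset K) {θ : ℝ} (h0 : 0 ≤ θ) (v : K → ℝ → ℝ) (h : ∀ k ∈ s, IsH θ (v k)) :
    IsH θ (fun x => ∑ k ∈ s, v k x) := by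
  classical
  induction s using Finset.induction_on with
  | empty => simpa using IsH.zero θ
  | insert k s hk ih =>
    have := IsH.add h0 (h k (Finset.mem_insert_self _ _)) (ih fun j hj => h j (Finset.mem_insert_of_mem hj))
    refine this.congr h0 one_pos fun x _ _ => ?_
    simp [Finset.sum_insert hk]

end P2a

section P2b
lemma summable_list {I : Type} (w : I → ℝ) (hw : ∀ i, 0 ≤ w i) (hs : Summable w)
    (h1 : ∑' i, w i < 1) : Summable (fun l : List I => (l.map w).prod) := by
  classical
  set W := ∑' i, w i
  have hnn : ∀ l : List I, 0 ≤ (l.map w).prod := fun l =>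
    List.prod_nonneg (by intro a ha; obtain ⟨i, _, rfl⟩ := List.mem_map.1 ha; exact hw i)
  have hW : 0 ≤ W := tsum_nonneg hw
  have hpos : 0 < 1 - W := by linarith
  have key : ∀ N : ℕ, ∀ s : Finset (List I), (∀ l ∈ s, l.length < N) →
      ∑ l ∈ s, (l.map w).prod ≤ 1 / (1 - W) := by
    intro N
    induction N with
    | zero =>
      intro s hs
      have : s = ∅ := Finset.eq_empty_of_forall_notMem fun l hl => by simpa using hs l hl
      rw [this]; simp; linarith
    | succ N ih =>
      intro s hl
      set J := s.biUnion List.toFinset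
      set s' := (s.filter (· ≠ [])).image List.tail
      have hsub : s ⊆ insert [] ((J ×ˢ s').image fun p => p.1 :: p.2) := by
        intro l hl
        cases l with
        | nil => simp
        | cons i t =>
          refine Finset.mem_insert_of_mem (Finset.mem_image.2 ⟨(i, t), ?_, rfl⟩)
          refine Finset.mem_product.2 ⟨Finset.mem_biUnion.2 ⟨_, hl, by simp⟩, ?_⟩
          exact Finset.mem_image.2 ⟨i :: t, by simp [hl], rfl⟩
      have h2 : ∑ l ∈ s', (l.map w).prod ≤ 1 / (1 - W) := by
        refine ih s' fun l h => ?_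
        obtain ⟨l', h', rfl⟩ := Finset.mem_image.1 h
        obtain ⟨h3, h4⟩ := Finset.mem_filter.1 h'
        have := hl l' h3
        have := List.length_pos_iff.2 h4
        rw [List.length_tail]; omega
      have h3 : ∑ i ∈ J, w i ≤ W := hs.sum_le_tsum _ (fun i _ => hw i)
      have h0 : 0 ≤ ∑ l ∈ s', (l.map w).prod := Finset.sum_nonneg fun l _ => hnn l
      calc ∑ l ∈ s, (l.map w).prod ≤ ∑ l ∈ insert [] ((J ×ˢ s').image fun p => p.1 :: p.2), (l.map w).prod :=
            Finset.sum_le_sum_of_subset_of_nonneg hsub fun l _ _ => hnn l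
        _ = 1 + ∑ l ∈ ((J ×ˢ s').image fun p => p.1 :: p.2), (l.map w).prod := by
            rw [Finset.sum_insert (by simp)]; simp
        _ = 1 + ∑ p ∈ J ×ˢ s', w p.1 * (p.2.map w).prod := by
            rw [Finset.sum_image]
            · simp
            · rintro ⟨a, b⟩ _ ⟨a', b'⟩ _ h; simpa using h
        _ = 1 + (∑ i ∈ J, w i) * ∑ l ∈ s', (l.map w).prod := by
            rw [Finset.sum_mul_sum, Finset.sum_product]
        _ ≤ 1 + W * (1 / (1 - W)) := by gcongr
        _ = 1 / (1 - W) := by field_simp; ring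
  refine summable_of_sum_le hnn (c := 1 / (1 - W)) fun s => ?_
  refine key (s.sup List.length + 1) s fun l hl => ?_
  exact Nat.lt_succ_of_le (Finset.le_sup (f := List.length) hl)

lemma finite_list {I : Type} (e : I → ℝ) {θ : ℝ} (hθ : 0 < θ) (he : ∀ i, θ ≤ e i)
    (hf : ∀ M, {i | e i ≤ M}.Finite) (M : ℝ) : {l : List I | (l.map e).sum ≤ M}.Finite := by
  have key : ∀ N : ℕ, {l : List I | l.length ≤ N ∧ ∀ i ∈ l, e i ≤ M}.Finite := by
    intro N
    induction N with
    | zero =>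
      refine (Set.finite_singleton []).subset ?_
      rintro l ⟨h, _⟩
      simpa using h
    | succ N ih =>
      refine ((Set.finite_singleton []).union (Set.Finite.image2 (fun i l => i :: l) (hf M) ih)).subset ?_
      rintro l ⟨h, h'⟩
      cases l with
      | nil => left; rfl
      | cons i t =>
        right
        refine ⟨i, h' i (by simp), t, ⟨by simpa using h, fun j hj => h' j (by simp [hj])⟩, rfl⟩
  have hlen : ∀ l : List I, θ * l.length ≤ (l.map e).sum := by
    intro l
    induction l with
    | nil => simp
    | cons i t ih => simp; have := he i; nlinarith
  have hmem : ∀ l : List I, ∀ i ∈ l, e i ≤ (l.map e).sum := by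
    intro l i hi
    exact List.single_le_sum (by
      intro a ha; obtain ⟨j, _, rfl⟩ := List.mem_map.1 ha; exact hθ.le.trans (he j)) _ (List.mem_map_of_mem hi)
  refine (key (Nat.ceil (M / θ))).subset ?_
  intro l hl
  refine ⟨?_, fun i hi => (hmem l i hi).trans hl⟩
  have h1 := (hlen l).trans hl
  have h2 : (l.length : ℝ) ≤ M / θ := by rw [le_div_iff₀ hθ]; linarith
  exact_mod_cast h2.trans (Nat.le_ceil _)

/-- norm bound in the weighted l1 space -/
def nS (ρ : ℝ) (a : ℕ → ℝ) (N : ℝ) : Prop :=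
  Summable (fun n => |a n| * ρ ^ n) ∧ ∑' n, |a n| * ρ ^ n ≤ N

def evS (a : ℕ → ℝ) (z : ℝ) : ℝ := ∑' n, a n * z ^ n

def cm (a b : ℕ → ℝ) (n : ℕ) : ℝ := ∑ p ∈ Finset.HasAntidiagonal.antidiagonal n, a p.1 * b p.2

lemma nS.nonneg {ρ N : ℝ} {a : ℕ → ℝ} (hρ : 0 < ρ) (h : nS ρ a N) : 0 ≤ N :=
  (tsum_nonneg fun n => by positivity).trans h.2

lemma nS.summ {ρ N z : ℝ} {a : ℕ → ℝ} (h : nS ρ a N) (hz : |z| ≤ ρ) :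
    Summable (fun n => ‖a n * z ^ n‖) := by
  refine Summable.of_nonneg_of_le (fun n => norm_nonneg _) (fun n => ?_) h.1
  rw [norm_mul, norm_pow, Real.norm_eq_abs, Real.norm_eq_abs]
  gcongr

lemma nS.ev_le {ρ N z : ℝ} {a : ℕ → ℝ} (h : nS ρ a N) (hz : |z| ≤ ρ) : |evS a z| ≤ N := by
  refine le_trans ?_ h.2
  refine tsum_of_norm_bounded (f := fun n => a n * z ^ n) h.1.hasSum fun n => ?_
  rw [norm_mul, norm_pow, Real.norm_eq_abs, Real.norm_eq_abs]
  gcongr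

lemma nS.coeff_le {ρ N : ℝ} {a : ℕ → ℝ} (hρ : 0 < ρ) (h : nS ρ a N) (j : ℕ) :
    |a j| ≤ N * (ρ ^ j)⁻¹ := by
  rw [← div_eq_mul_inv, le_div_iff₀ (by positivity)]
  exact (h.1.le_tsum j fun n _ => by positivity).trans h.2

lemma nS.mono {ρ ρ' N : ℝ} {a : ℕ → ℝ} (h' : 0 < ρ') (hle : ρ' ≤ ρ) (h : nS ρ a N) : nS ρ' a N := by
  have hl : ∀ n, |a n| * ρ' ^ n ≤ |a n| * ρ ^ n := fun n => by gcongr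
  have hs := Summable.of_nonneg_of_le (fun n => by positivity) hl h.1
  exact ⟨hs, (hs.tsum_le_tsum hl h.1).trans h.2⟩

lemma nS.cm {ρ N M : ℝ} {a b : ℕ → ℝ} (hρ : 0 < ρ) (ha : nS ρ a N) (hb : nS ρ b M) :
    nS ρ (cm a b) (N * M) := by
  have na : Summable fun n => ‖|a n| * ρ ^ n‖ := ha.1.congr fun n => by
    rw [Real.norm_of_nonneg (by positivity)]
  have nb : Summable fun n => ‖|b n| * ρ ^ n‖ := hb.1.congr fun n => by
    rw [Real.norm_of_nonneg (by positivity)]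
  have s1 := summable_norm_sum_mul_antidiagonal_of_summable_norm na nb
  have e1 := tsum_mul_tsum_eq_tsum_sum_antidiagonal_of_summable_norm na nb
  have s2 := s1.of_norm
  have hle : ∀ n, |_root_.cm a b n| * ρ ^ n ≤ ∑ kl ∈ Finset.HasAntidiagonal.antidiagonal n, |a kl.1| * ρ ^ kl.1 * (|b kl.2| * ρ ^ kl.2) := by
    intro n
    have : ∑ kl ∈ Finset.HasAntidiagonal.antidiagonal n, |a kl.1| * ρ ^ kl.1 * (|b kl.2| * ρ ^ kl.2) =
        (∑ kl ∈ Finset.HasAntidiagonal.antidiagonal n, |a kl.1 * b kl.2|) * ρ ^ n := by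
      rw [Finset.sum_mul]
      refine Finset.sum_congr rfl fun p hp => ?_
      rw [← Finset.HasAntidiagonal.mem_antidiagonal.1 hp, pow_add, abs_mul]; ring
    rw [this]
    refine mul_le_mul_of_nonneg_right ?_ (by positivity)
    exact Finset.abs_sum_le_sum_abs _ _
  have s3 := Summable.of_nonneg_of_le (fun n => by positivity) hle s2
  refine ⟨s3, (s3.tsum_le_tsum hle s2).trans ?_⟩
  rw [← e1]
  exact mul_le_mul ha.2 hb.2 (tsum_nonneg fun n => by positivity) (ha.nonneg hρ)

lemma evS_cm {ρ N M z : ℝ} {a b : ℕ → ℝ} (ha : nS ρ a N) (hb : nS ρ b M) (hz : |z| ≤ ρ) :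
    evS (cm a b) z = evS a z * evS b z := by
  rw [evS, evS, evS, tsum_mul_tsum_eq_tsum_sum_antidiagonal_of_summable_norm (ha.summ hz) (hb.summ hz)]
  refine tsum_congr fun n => ?_
  rw [cm, Finset.sum_mul]
  refine Finset.sum_congr rfl fun p hp => ?_
  rw [← Finset.HasAntidiagonal.mem_antidiagonal.1 hp, pow_add]; ring

lemma nS.shift {ρ N : ℝ} {a : ℕ → ℝ} (hρ : 0 < ρ) (ha : nS ρ a N) (m : ℕ) :
    nS ρ (fun n => a (n + m)) ((ρ ^ m)⁻¹ * N) := by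
  have s1 := (summable_nat_add_iff m).2 ha.1
  have hfe : (fun n => |a (n + m)| * ρ ^ n) = fun n => (ρ ^ m)⁻¹ * (|a (n + m)| * ρ ^ (n + m)) := by
    funext n
    rw [pow_add]; field_simp
  have h2 : ∑' n, |a (n + m)| * ρ ^ (n + m) ≤ N := by
    refine le_trans ?_ ha.2
    rw [← ha.1.sum_add_tsum_nat_add m]
    have : 0 ≤ ∑ i ∈ Finset.range m, |a i| * ρ ^ i := Finset.sum_nonneg fun i _ => by positivity
    linarith
  constructor
  · rw [hfe]; exact s1.mul_left _
  · rw [hfe, tsum_mul_left]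
    gcongr

lemma evS_shift {ρ N z : ℝ} {a : ℕ → ℝ} (ha : nS ρ a N) (hz : |z| ≤ ρ) (m : ℕ) :
    evS a z = ∑ j ∈ Finset.range m, a j * z ^ j + z ^ m * evS (fun n => a (n + m)) z := by
  rw [evS, ← (ha.summ hz).of_norm.sum_add_tsum_nat_add m, evS, ← tsum_mul_left]
  congr 1
  refine tsum_congr fun n => ?_
  rw [pow_add]; ring

lemma analytic_ps {φ : ℝ → ℝ} (h : AnalyticAt ℝ φ 0) :
    ∃ ρ > 0, ∃ a N, nS ρ a N ∧ ∀ z, |z| ≤ ρ → φ z = evS a z := by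
  obtain ⟨p, r, hp⟩ := h
  obtain ⟨ρ, h0, hρ⟩ := ENNReal.lt_iff_exists_nnreal_btwn.1 hp.r_pos
  have hρ0 : 0 < (ρ : ℝ) := by exact_mod_cast h0
  refine ⟨ρ, hρ0, p.coeff, _, ⟨?_, le_rfl⟩, ?_⟩
  · refine (p.summable_norm_mul_pow (hρ.trans_le hp.r_le)).congr fun n => ?_
    rw [FormalMultilinearSeries.norm_apply_eq_norm_coef, Real.norm_eq_abs]
  · intro z hz
    have hz' : z ∈ Metric.eball (0 : ℝ) r := by
      rw [mem_eball_zero_iff]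
      refine lt_of_le_of_lt ?_ hρ
      rw [enorm_le_coe]
      exact_mod_cast hz
    have := hp.hasSum hz'
    rw [zero_add] at this
    rw [evS, ← this.tsum_eq]
    refine tsum_congr fun n => ?_
    rw [FormalMultilinearSeries.apply_eq_pow_smul_coeff, smul_eq_mul, mul_comm]

def phiL {I : Type} (m : ℕ) (hh : I → ℕ → ℝ) (φ : ℕ → ℝ) : List I → ℕ → ℝ
  | [] => φ
  | i :: l => cm (hh i) (fun n => phiL m hh φ l (n + m))

lemma list_prod_rpow {I : Type} (a e : I → ℝ) {x : ℝ} (hx : 0 < x) (l : List I) :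
    (l.map fun i => a i * x ^ e i).prod = (l.map a).prod * x ^ (l.map e).sum := by
  induction l with
  | nil => simp
  | cons i t ih => simp [ih, Real.rpow_add hx]; ring

lemma list_prod_const {I : Type} (C : ℝ) (w : I → ℝ) (l : List I) :
    (l.map fun i => C * w i).prod = C ^ l.length * (l.map w).prod := by
  induction l with
  | nil => simp
  | cons i t ih => simp [ih, pow_succ]; ring

lemma list_prod_abs {I : Type} (w : I → ℝ) (l : List I) :
    |(l.map w).prod| = (l.map fun i => |w i|).prod := by
  induction l with
  | nil => simp
  | cons i t ih => simp [ih, abs_mul]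

def listEquivSum (I : Type) : List I ≃ Unit ⊕ (I × List I) where
  toFun := fun l => match l with
    | [] => Sum.inl ()
    | i :: t => Sum.inr (i, t)
  invFun := fun o => match o with
    | Sum.inl _ => []
    | Sum.inr p => p.1 :: p.2
  left_inv := by intro l; cases l <;> rfl
  right_inv := by intro o; cases o <;> rfl

lemma tsum_list {I : Type} (f : List I → ℝ) (hf : Summable f) :
    ∑' l, f l = f [] + ∑' l, ∑' i, f (i :: l) := by
  have h1 : Summable fun o : Unit ⊕ (I × List I) => f ((listEquivSum I).symm o) :=
    (Equiv.summable_iff (listEquivSum I).symm).2 hf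
  have h2 : Summable fun p : I × List I => f (p.1 :: p.2) :=
    h1.comp_injective Sum.inr_injective
  have h3 : Summable fun p : List I × I => f (p.2 :: p.1) := (Equiv.prodComm _ _).summable_iff.2 h2
  have h4 : HasSum (fun o : Unit ⊕ (I × List I) => f ((listEquivSum I).symm o))
      (f [] + ∑' p : I × List I, f (p.1 :: p.2)) :=
    HasSum.sum (f := fun o : Unit ⊕ (I × List I) => f ((listEquivSum I).symm o)) (hasSum_unique _) h2.hasSum
  rw [← (listEquivSum I).symm.tsum_eq f, h4.tsum_eq]
  congr 1
  rw [← Summable.tsum_prod (f := fun p : List I × I => f (p.2 :: p.1)) h3]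
  exact ((Equiv.prodComm _ _).tsum_eq (fun p : I × List I => f (p.1 :: p.2))).symm

end P2b

section P2c
lemma nS_phiL {I : Type} (m : ℕ) {ρ C0 N : ℝ} (hρ : 0 < ρ) (hh : I → ℕ → ℝ)
    (hC : ∀ i, nS ρ (hh i) C0) (φ : ℕ → ℝ) (hφ : nS ρ φ N) (l : List I) :
    nS ρ (phiL m hh φ l) (N * (C0 * (ρ ^ m)⁻¹) ^ l.length) := by
  induction l with
  | nil => simpa [phiL] using hφ
  | cons i t ih =>
    have := (hC i).cm hρ (ih.shift hρ m)
    rw [phiL]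
    convert this using 1
    simp only [List.length_cons, pow_succ]; ring

lemma div_core {I : Type} (m : ℕ) {ρ C0 N : ℝ} (hρ : 0 < ρ) (hC0 : 0 ≤ C0) (hh : I → ℕ → ℝ)
    (hC : ∀ i, nS ρ (hh i) C0) (φ : ℕ → ℝ) (hφ : nS ρ φ N) (a e : I → ℝ) {θ ε0 : ℝ} (hθ : 0 < θ)
    (he : ∀ i, θ ≤ e i) (hf : ∀ M, {i | e i ≤ M}.Finite) (hε0 : 0 < ε0)
    (hs : Summable fun i => |a i| * ε0 ^ e i) :
    ∃ ε > 0, ε ≤ ε0 ∧ ∃ A : ℕ → ℝ → ℝ, (∀ j, IsH 0 (A j)) ∧ ∀ x z, 0 < x → x ≤ ε → |z| ≤ ρ →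
      z ^ m = ∑' i, (-a i * x ^ e i) * evS (hh i) z →
      evS φ z = ∑ j ∈ Finset.range m, A j x * z ^ j := by
  set C := C0 * (ρ ^ m)⁻¹ with hCdef
  have hCn : 0 ≤ C := by positivity
  have hN := hφ.nonneg hρ
  set S := ∑' i, |a i| * ε0 ^ e i with hS
  have hS0 : 0 ≤ S := tsum_nonneg fun i => by positivity
  obtain ⟨ε, hε, hεle, hsm⟩ : ∃ ε > 0, ε ≤ ε0 ∧ C * ∑' i, |a i| * ε ^ e i < 1 := by
    set b := 1 / (2 * (C * S + 1)) with hb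
    have hCS : 0 ≤ C * S := by positivity
    have hb0 : 0 < b := by positivity
    have hb1 : b ≤ 1 := by rw [hb, div_le_one (by positivity)]; linarith
    have hδ : 0 < b ^ θ⁻¹ := Real.rpow_pos_of_pos hb0 _
    have hδ1 : b ^ θ⁻¹ ≤ 1 := Real.rpow_le_one hb0.le hb1 (by positivity)
    have hle : ε0 * b ^ θ⁻¹ ≤ ε0 := by nlinarith
    have hpos : 0 < ε0 * b ^ θ⁻¹ := by positivity
    refine ⟨ε0 * b ^ θ⁻¹, hpos, hle, ?_⟩
    have hs1 : Summable fun i => |(|a i|)| * ε0 ^ e i := by simpa using hs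
    have := tail_bound (a := fun i => |a i|) (e := e) (θ := θ) (fun i => Or.inr (he i)) hε0 hs1 hpos hle
      (summ_shrink hθ.le he hpos hle hs).hasSum
    simp only [abs_abs] at this
    rw [← hS, mul_div_cancel_left₀ _ hε0.ne', Real.rpow_inv_rpow hb0.le hθ.ne'] at this
    have h2 := (le_abs_self _).trans this
    calc C * _ ≤ C * (b * S) := by gcongr
      _ = b * (C * S) := by ring
      _ < 1 := by
        rw [hb, div_mul_eq_mul_div, div_lt_one (by positivity)]; linarith
  set w : I → ℝ := fun i => C * (|a i| * ε ^ e i) with hw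
  have hsε := summ_shrink hθ.le he hε hεle hs
  have hsl : Summable (fun l : List I => (l.map w).prod) := by
    refine summable_list w (fun i => by positivity) (hsε.mul_left C) ?_
    rw [tsum_mul_left]; exact hsm
  have hwl : ∀ l : List I, (l.map w).prod = C ^ l.length * ((l.map fun i => |a i|).prod * ε ^ (l.map e).sum) := by
    intro l
    rw [hw, list_prod_const, list_prod_rpow _ _ hε]
  have hbnd : ∀ l : List I, nS ρ (phiL m hh φ l) (N * C ^ l.length) := fun l => nS_phiL m hρ hh hC φ hφ l
  have hsum0 : ∀ l : List I, 0 ≤ (l.map e).sum := fun l =>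
    List.sum_nonneg (by intro r hr; obtain ⟨j, _, rfl⟩ := List.mem_map.1 hr; exact hθ.le.trans (he j))
  have hprodabs : ∀ l : List I, |(l.map fun i => -a i).prod| = (l.map fun i => |a i|).prod := by
    intro l; rw [list_prod_abs]; simp
  have hsj : ∀ j, Summable fun l : List I => |(l.map fun i => -a i).prod * phiL m hh φ l j| * ε ^ (l.map e).sum := by
    intro j
    refine Summable.of_nonneg_of_le (fun l => by positivity) (fun l => ?_) (hsl.mul_left (N * (ρ ^ j)⁻¹))
    rw [abs_mul, hprodabs, hwl]
    have h1 := (hbnd l).coeff_le hρ j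
    have h2 : 0 ≤ (l.map fun i => |a i|).prod := by rw [← hprodabs]; positivity
    have h3 : 0 ≤ (l.map fun i => |a i|).prod * ε ^ (l.map e).sum := by positivity
    calc _ = |phiL m hh φ l j| * ((l.map fun i => |a i|).prod * ε ^ (l.map e).sum) := by ring
      _ ≤ (N * C ^ l.length * (ρ ^ j)⁻¹) * ((l.map fun i => |a i|).prod * ε ^ (l.map e).sum) := by gcongr
      _ = _ := by ring
  have hsjx : ∀ j x, 0 < x → x ≤ ε → Summable fun l : List I => (l.map fun i => -a i).prod * phiL m hh φ l j * x ^ (l.map e).sum := by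
    intro j x hx hx'
    have := summ_shrink le_rfl hsum0 hx hx' (hsj j)
    refine Summable.of_norm (this.congr fun l => ?_)
    rw [norm_mul, Real.norm_eq_abs, Real.norm_eq_abs, abs_of_pos (Real.rpow_pos_of_pos hx _)]
  refine ⟨ε, hε, hεle, fun j x => ∑' l : List I, ((l.map fun i => -a i).prod * phiL m hh φ l j) * x ^ (l.map e).sum, ?_, ?_⟩
  · intro j
    refine ⟨List I, fun l => (l.map fun i => -a i).prod * phiL m hh φ l j, fun l => (l.map e).sum, ε, hε,
      hsum0, finite_list e hθ he hf, hsj j, fun x hx hx' => (hsjx j x hx hx').hasSum⟩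
  · intro x z hx hx' hz hzm
    set b : List I → ℝ := fun l => (l.map fun i => -a i * x ^ e i).prod with hb
    have hbe : ∀ l, b l = (l.map fun i => -a i).prod * x ^ (l.map e).sum := fun l => list_prod_rpow _ _ hx l
    set f : List I → ℝ := fun l => b l * evS (phiL m hh φ l) z with hfdef
    have hfs : Summable f := by
      refine Summable.of_norm_bounded (hsl.mul_left N) fun l => ?_
      rw [hfdef, hwl, norm_mul, Real.norm_eq_abs, Real.norm_eq_abs, hbe, abs_mul, hprodabs, abs_of_pos (Real.rpow_pos_of_pos hx _)]
      have h1 := (hbnd l).ev_le hz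
      have h2 : 0 ≤ (l.map fun i => |a i|).prod := by rw [← hprodabs]; positivity
      have h4 := Real.rpow_le_rpow hx.le hx' (hsum0 l)
      calc _ ≤ (l.map fun i => |a i|).prod * ε ^ (l.map e).sum * (N * C ^ l.length) := by gcongr
        _ = _ := by ring
    have hPs : Summable fun l => ∑ j ∈ Finset.range m, b l * phiL m hh φ l j * z ^ j := by
      refine summable_sum fun j _ => ?_
      refine Summable.mul_right _ ((hsjx j x hx hx').congr fun l => ?_)
      rw [hbe]; ring
    have hstep : ∀ l, f l = ∑ j ∈ Finset.range m, b l * phiL m hh φ l j * z ^ j + ∑' i, f (i :: l) := by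
      intro l
      have h1 := evS_shift (hbnd l) hz m
      have h2 : ∑' i, f (i :: l) = z ^ m * (b l * evS (fun n => phiL m hh φ l (n + m)) z) := by
        rw [hzm, ← tsum_mul_right]
        refine tsum_congr fun i => ?_
        simp only [hfdef, hb, List.map_cons, List.prod_cons, phiL]
        rw [evS_cm (hC i) ((hbnd l).shift hρ m) hz]; ring
      rw [h2]
      simp only [hfdef]
      rw [h1, mul_add, Finset.mul_sum]
      congr 1
      · exact Finset.sum_congr rfl fun j _ => by ring
      · ring
    have hQs : Summable fun l => ∑' i, f (i :: l) := by
      refine (hfs.sub hPs).congr fun l => ?_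
      rw [hstep l]; ring
    have h1 := tsum_list f hfs
    have h2 : ∑' l, f l = ∑' l, ∑ j ∈ Finset.range m, b l * phiL m hh φ l j * z ^ j + ∑' l, ∑' i, f (i :: l) := by
      rw [← hPs.tsum_add hQs]
      exact tsum_congr hstep
    have h3 : f [] = evS φ z := by simp [hfdef, hb, phiL]
    rw [← h3]
    have h4 : f [] = ∑' l, ∑ j ∈ Finset.range m, b l * phiL m hh φ l j * z ^ j := by linarith
    rw [h4, Summable.tsum_finsetSum]
    · refine Finset.sum_congr rfl fun j _ => ?_
      rw [tsum_mul_right]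
      congr 1
      exact tsum_congr fun l => by rw [hbe]; ring
    · intro j _
      refine Summable.mul_right _ ((hsjx j x hx hx').congr fun l => ?_)
      rw [hbe]; ring

open Filter Topology in
lemma DIV {K : Type} [Fintype K] (F0 : ℝ → ℝ) (P : K → ℝ → ℝ) (hF0 : AnalyticAt ℝ F0 0)
    (hne : ¬ ∀ᶠ z in 𝓝 0, F0 z = 0) (hP : ∀ k, AnalyticAt ℝ (P k) 0) (Ah : K → ℝ → ℝ)
    {θ : ℝ} (hθ : 0 < θ) (hA : ∀ k, IsH θ (Ah k)) :
    ∃ m : ℕ, ∀ φ, AnalyticAt ℝ φ 0 → ∃ ρ > 0, ∃ ε > 0, ∃ A : ℕ → ℝ → ℝ, (∀ j, IsH 0 (A j)) ∧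
      ∀ x z, 0 < x → x ≤ ε → |z| ≤ ρ → F0 z + ∑ k, Ah k x * P k z = 0 →
        φ z = ∑ j ∈ Finset.range m, A j x * z ^ j := by
  classical
  obtain ⟨m, u, hu, hu0, hFu⟩ := hF0.exists_eventuallyEq_pow_smul_nonzero_iff.2 hne
  refine ⟨m, fun φ hφ => ?_⟩
  have hk : ∀ k, AnalyticAt ℝ (fun z => P k z / u z) 0 := fun k => (hP k).fun_div hu hu0
  choose r hr hc Nc hnc hev using fun k => analytic_ps (hk k)
  obtain ⟨r1, hr1, φs, N, hφn, hφev⟩ := analytic_ps hφ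
  have hev2 : ∀ᶠ z in 𝓝 (0 : ℝ), u z ≠ 0 ∧ F0 z = z ^ m * u z := by
    filter_upwards [hu.continuousAt.eventually_ne hu0, hFu] with z h1 h2
    exact ⟨h1, by simpa using h2⟩
  obtain ⟨r2, hr2, hr2'⟩ := Metric.eventually_nhds_iff.1 hev2
  obtain ⟨ρ, hρ, hρ1, hρ2, hρk⟩ : ∃ ρ > 0, ρ ≤ r1 ∧ ρ < r2 ∧ ∀ k, ρ ≤ r k := by
    have e1 : ∀ᶠ ρ in 𝓝[>] (0 : ℝ), ∀ k, ρ ≤ r k := by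
      rw [eventually_all]
      intro k
      filter_upwards [Ioc_mem_nhdsGT (hr k)] with ρ h using h.2
    have e2 : ∀ᶠ ρ in 𝓝[>] (0 : ℝ), 0 < ρ ∧ ρ ≤ r1 ∧ ρ < r2 := by
      filter_upwards [Ioc_mem_nhdsGT hr1, Ioo_mem_nhdsGT hr2] with ρ h h' using ⟨h.1, h.2, h'.2⟩
    obtain ⟨ρ, h1, h2⟩ := (e1.and e2).exists
    exact ⟨ρ, h2.1, h2.2.1, h2.2.2, h1⟩
  choose ι a e ε hε he hf hs hh using hA
  obtain ⟨ε0, hε0, hε0k⟩ : ∃ ε0 > 0, ∀ k, ε0 ≤ ε k := by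
    have e1 : ∀ᶠ ρ in 𝓝[>] (0 : ℝ), ∀ k, ρ ≤ ε k := by
      rw [eventually_all]
      intro k
      filter_upwards [Ioc_mem_nhdsGT (hε k)] with ρ h using h.2
    obtain ⟨ρ, h1, h2⟩ := (e1.and self_mem_nhdsWithin).exists
    exact ⟨ρ, h2, h1⟩
  set C0 := ∑ k, |Nc k| with hC0
  have hCk : ∀ k, Nc k ≤ C0 := fun k =>
    (le_abs_self _).trans (Finset.single_le_sum (f := fun k => |Nc k|) (fun i _ => abs_nonneg _) (Finset.mem_univ k))
  have hnk : ∀ k, nS ρ (hc k) C0 := fun k =>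
    ⟨((hnc k).mono hρ (hρk k)).1, ((hnc k).mono hρ (hρk k)).2.trans (hCk k)⟩
  have hs0 : ∀ k, Summable fun i => |a k i| * ε0 ^ e k i := fun k => summ_shrink hθ.le (he k) hε0 (hε0k k) (hs k)
  have hsS : Summable fun p : (Σ k, ι k) => |a p.1 p.2| * ε0 ^ e p.1 p.2 := by
    rw [summable_sigma_of_nonneg (fun p => by positivity)]
    exact ⟨fun k => hs0 k, Summable.of_finite⟩
  obtain ⟨δ, hδ, hδ0, A, hAH, hA⟩ := div_core (I := Σ k, ι k) m hρ (by positivity) (fun p => hc p.1) (fun p => hnk p.1)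
    φs (hφn.mono hρ hρ1) (fun p => a p.1 p.2) (fun p => e p.1 p.2) hθ (fun p => he p.1 p.2) (by
      intro M
      refine (Set.finite_iUnion fun k => (hf k M).image (Sigma.mk k)).subset ?_
      rintro ⟨k, i⟩ h
      exact mem_iUnion.2 ⟨k, i, h, rfl⟩) hε0 hsS
  refine ⟨ρ, hρ, δ, hδ, A, hAH, fun x z hx hx' hz hF => ?_⟩
  rw [hφev z (hz.trans hρ1)]
  refine hA x z hx hx' hz ?_
  obtain ⟨hu1, hu2⟩ := hr2' (show dist z 0 < r2 by rw [dist_zero_right, Real.norm_eq_abs]; linarith)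
  have hxk : ∀ k, x ≤ ε k := fun k => hx'.trans (hδ0.trans (hε0k k))
  have hsx : Summable fun p : (Σ k, ι k) => (-a p.1 p.2 * x ^ e p.1 p.2) * evS (hc p.1) z := by
    have h1 := summ_shrink (a := fun p : (Σ k, ι k) => a p.1 p.2) (e := fun p => e p.1 p.2) hθ.le (fun p => he p.1 p.2) hx (hx'.trans hδ0) hsS
    refine Summable.of_norm_bounded (h1.mul_right C0) fun p => ?_
    rw [norm_mul, norm_mul, Real.norm_eq_abs, Real.norm_eq_abs, Real.norm_eq_abs, abs_neg, abs_of_pos (Real.rpow_pos_of_pos hx _)]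
    exact mul_le_mul_of_nonneg_left ((hnk p.1).ev_le hz) (by positivity)
  rw [hsx.tsum_sigma, tsum_fintype]
  have h2 : ∀ k, ∑' i, (-a k i * x ^ e k i) * evS (hc k) z = - (Ah k x * P k z) / u z := by
    intro k
    rw [tsum_mul_right, ← hev k z (hz.trans (hρk k))]
    have := (hh k x hx (hxk k)).neg.tsum_eq
    have h3 : ∑' i, -a k i * x ^ e k i = - Ah k x := by
      rw [← this]; exact tsum_congr fun i => by ring
    rw [h3]; ring
  simp only [h2]
  rw [← Finset.sum_div, Finset.sum_neg_distrib, eq_div_iff hu1, ← hu2]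
  linarith

end P2c

section P2d
def evH (x : ℝ) : Hring →+* ℝ := (Pi.evalRingHom _ x).comp Hring.subtype

open Filter Topology in
lemma GAP {K L : Type} [Fintype K] [Fintype L] (F0 : ℝ → ℝ) (P : K → ℝ → ℝ) (hF0 : AnalyticAt ℝ F0 0)
    (hne : ¬ ∀ᶠ z in 𝓝 0, F0 z = 0) (hP : ∀ k, AnalyticAt ℝ (P k) 0) (Ah : K → ℝ → ℝ)
    {θ : ℝ} (hθ : 0 < θ) (hA : ∀ k, IsH θ (Ah k)) (B Q : L → ℝ → ℝ) (hB : ∀ l, IsH 0 (B l))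
    (hQ : ∀ l, AnalyticAt ℝ (Q l) 0) :
    ∃ ρ > 0, ∃ ε > 0, ∃ c > 0, ∃ ν : ℝ, ∀ x z, 0 < x → x ≤ ε → |z| ≤ ρ → F0 z + ∑ k, Ah k x * P k z = 0 →
      |∑ l, B l x * Q l z| < 1 → |∑ l, B l x * Q l z| < c * x ^ ν → ∑ l, B l x * Q l z = 0 := by
  classical
  obtain ⟨m, hm⟩ := DIV F0 P hF0 hne hP Ah hθ hA
  obtain ⟨ρ1, hρ1, ε1, hε1, A1, -, hA1⟩ := hm (fun _ => 1) analyticAt_const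
  have hQi : ∀ l, ∀ i : Fin m, AnalyticAt ℝ (fun z => Q l z * z ^ (i : ℕ)) 0 := fun l i =>
    (hQ l).fun_mul (analyticAt_id.pow _)
  choose ρ2 hρ2 ε2 hε2 A hAH hAe using fun (p : L × Fin m) => hm _ (hQi p.1 p.2)
  let M : Matrix (Fin m) (Fin m) Hring := fun i j =>
    ⟨fun x => ∑ l, B l x * A (l, i) j x, IsH.sum _ le_rfl (fun l x => B l x * A (l, i) j x) fun l _ => by
      have := IsH.mul le_rfl le_rfl (hB l) (hAH (l, i) j)
      rw [add_zero] at this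
      exact this⟩
  set p := M.charpoly with hp
  have hmon : p.coeff p.natDegree = 1 := M.charpoly_monic
  -- annihilation
  obtain ⟨ρ, hρ, hρ1', hρ2'⟩ : ∃ ρ > 0, ρ ≤ ρ1 ∧ ∀ k, ρ ≤ ρ2 k := by
    have e1 : ∀ᶠ ρ in 𝓝[>] (0 : ℝ), ∀ k, ρ ≤ ρ2 k := by
      rw [eventually_all]
      intro k
      filter_upwards [Ioc_mem_nhdsGT (hρ2 k)] with ρ h using h.2
    obtain ⟨ρ, h1, h2⟩ := (e1.and (Ioc_mem_nhdsGT hρ1)).exists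
    exact ⟨ρ, h2.1, h2.2, h1⟩
  have ann : ∀ᶠ ε in 𝓝[>] (0 : ℝ), ∀ x z, 0 < x → x ≤ ε → |z| ≤ ρ → F0 z + ∑ k, Ah k x * P k z = 0 →
      ∑ i ∈ Finset.range (p.natDegree + 1), evH x (p.coeff i) * (∑ l, B l x * Q l z) ^ i = 0 := by
    have e1 : ∀ᶠ ε in 𝓝[>] (0 : ℝ), ∀ k, ε ≤ ε2 k := by
      rw [eventually_all]
      intro k
      filter_upwards [Ioc_mem_nhdsGT (hε2 k)] with ρ h using h.2
    filter_upwards [e1, Ioc_mem_nhdsGT hε1] with ε h1 h2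
    intro x z hx hx' hz hF
    set G := ∑ l, B l x * Q l z with hG
    rw [← Polynomial.eval₂_eq_sum_range, ← Polynomial.eval_map, hp, ← Matrix.charpoly_map, Matrix.eval_charpoly]
    rw [← Matrix.exists_mulVec_eq_zero_iff]
    refine ⟨fun j => z ^ (j : ℕ), ?_, ?_⟩
    · intro h0
      have h3 := hA1 x z hx (hx'.trans h2.2) (hz.trans hρ1') hF
      rw [Finset.sum_eq_zero] at h3
      · exact one_ne_zero h3
      · intro j hj
        have := congrFun h0 ⟨j, Finset.mem_range.1 hj⟩
        simp only [Pi.zero_apply] at this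
        rw [this, mul_zero]
    · rw [Matrix.sub_mulVec, sub_eq_zero]
      funext i
      rw [Matrix.scalar_apply, ← Matrix.smul_one_eq_diagonal, Matrix.smul_mulVec, Matrix.one_mulVec]
      simp only [Pi.smul_apply, smul_eq_mul, Matrix.mulVec, dotProduct, Matrix.map_apply]
      rw [hG, Finset.sum_mul]
      have h4 : ∀ l, B l x * Q l z * z ^ (i : ℕ) = ∑ j : Fin m, B l x * A (l, i) j x * z ^ (j : ℕ) := by
        intro l
        have := hAe (l, i) x z hx (hx'.trans (h1 _)) (hz.trans (hρ2' _)) hF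
        simp only at this
        rw [mul_assoc, this, Finset.mul_sum, ← Fin.sum_univ_eq_sum_range (fun j => B l x * (A (l, i) j x * z ^ j))]
        exact Finset.sum_congr rfl fun j _ => by ring
      rw [Finset.sum_congr rfl fun l _ => h4 l, Finset.sum_comm]
      refine Finset.sum_congr rfl fun j _ => ?_
      rw [← Finset.sum_mul]
      rfl
  -- order
  have hex : ∃ i, ¬ ∃ ε > 0, ∀ x, 0 < x → x ≤ ε → evH x (p.coeff i) = 0 := by
    refine ⟨p.natDegree, ?_⟩
    rintro ⟨ε, hε, h⟩
    have := h ε hε le_rfl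
    rw [hmon, map_one] at this
    exact one_ne_zero this
  set k := Nat.find hex with hk
  have hk1 := Nat.find_spec hex
  rw [← hk] at hk1
  have hkd : k ≤ p.natDegree := by
    apply Nat.find_min'
    rintro ⟨ε, hε, h⟩
    have := h ε hε le_rfl
    rw [hmon, map_one] at this
    exact one_ne_zero this
  have hk0 : ∀ᶠ ε in 𝓝[>] (0 : ℝ), ∀ i : Fin k, ∀ x, 0 < x → x ≤ ε → evH x (p.coeff i) = 0 := by
    rw [eventually_all]
    intro i
    have := Nat.find_min hex i.2
    push Not at this
    obtain ⟨ε, hε, h⟩ := this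
    filter_upwards [Ioc_mem_nhdsGT hε] with ε' h' x hx hx' using h x hx (hx'.trans h'.2)
  obtain ⟨εk, hεk, ck, hck, ν, hνk⟩ := ((p.coeff k).2.order).resolve_left hk1
  choose εb hεb Cb hCb hbb using fun i : ℕ => IsH.bound (p.coeff i).2
  have hb0 : ∀ᶠ ε in 𝓝[>] (0 : ℝ), ∀ i : Fin (p.natDegree + 1), ε ≤ εb i := by
    rw [eventually_all]
    intro i
    filter_upwards [Ioc_mem_nhdsGT (hεb i)] with ε' h' using h'.2
  obtain ⟨ε, ⟨⟨h1, h2⟩, h3⟩, h4⟩ := (((ann.and hk0).and hb0).and (Ioc_mem_nhdsGT hεk)).exists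
  set S := ∑ i ∈ Finset.range (p.natDegree + 1), Cb i with hS
  have hS0 : 0 ≤ S := Finset.sum_nonneg fun i _ => hCb i
  refine ⟨ρ, hρ, ε, h4.1, ck / (S + 1), by positivity, ν, fun x z hx hx' hz hF hlt1 hlt2 => ?_⟩
  have hsum := h1 x z hx hx' hz hF
  set G := ∑ l, B l x * Q l z with hG
  by_contra hGne
  have hGpos : 0 < |G| := abs_pos.2 hGne
  rw [← Finset.sum_range_add_sum_Ico _ (show k ≤ p.natDegree + 1 by omega),
    Finset.sum_eq_zero (fun i hi => by rw [h2 ⟨i, Finset.mem_range.1 hi⟩ x hx hx', zero_mul]), zero_add,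
    Finset.sum_eq_sum_Ico_succ_bot (by omega)] at hsum
  have hb1 : |∑ i ∈ Finset.Ico (k + 1) (p.natDegree + 1), evH x (p.coeff i) * G ^ i| ≤ S * |G| ^ (k + 1) := by
    refine (Finset.abs_sum_le_sum_abs _ _).trans ?_
    have : ∀ i ∈ Finset.Ico (k + 1) (p.natDegree + 1), |evH x (p.coeff i) * G ^ i| ≤ Cb i * |G| ^ (k + 1) := by
      intro i hi
      obtain ⟨hi1, hi2⟩ := Finset.mem_Ico.1 hi
      have h5 := hbb i x hx (hx'.trans (h3 ⟨i, hi2⟩))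
      rw [Real.rpow_zero, mul_one] at h5
      rw [abs_mul, abs_pow]
      exact mul_le_mul h5 (pow_le_pow_of_le_one hGpos.le hlt1.le hi1) (by positivity) (hCb i)
    refine (Finset.sum_le_sum this).trans ?_
    rw [← Finset.sum_mul]
    refine mul_le_mul_of_nonneg_right ?_ (by positivity)
    exact Finset.sum_le_sum_of_subset_of_nonneg (fun i hi => by
      rw [Finset.mem_range]; exact (Finset.mem_Ico.1 hi).2) fun i _ _ => hCb i
  have h6 : evH x (p.coeff k) * G ^ k = - ∑ i ∈ Finset.Ico (k + 1) (p.natDegree + 1), evH x (p.coeff i) * G ^ i := by linarith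
  have h7 := congrArg abs h6
  rw [abs_neg, abs_mul, abs_pow] at h7
  have h8 := hνk x hx (hx'.trans h4.2)
  have h9 : |evH x (p.coeff k)| * |G| ^ k ≤ (S * |G|) * |G| ^ k := by
    rw [h7]; refine hb1.trans_eq ?_; ring
  have h10 := le_of_mul_le_mul_right h9 (by positivity)
  have h11 : ck * x ^ ν ≤ S * |G| := h8.trans h10
  rw [div_mul_eq_mul_div, lt_div_iff₀ (by positivity)] at hlt2
  nlinarith

end P2d

section P3a
def XG (v : ℝ → ℝ) : Prop :=
  ∃ (s : Finset ℝ) (c : ℝ → ℝ), s.Nonempty ∧ (∀ α ∈ s, c α ≠ 0) ∧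
    ∀ x, 0 < x → v x = ∑ α ∈ s, c α * x ^ α

def Lead (V : ℝ → ℝ) : Prop :=
  ∃ ν c : ℝ, c ≠ 0 ∧ ∃ (w : ℝ → ℝ) (θ : ℝ), 0 < θ ∧ IsH θ w ∧ ∃ ε > 0, ∀ ξ, 0 < ξ → ξ ≤ ε →
    V ξ = ξ ^ ν * (c + w ξ)

lemma XG.lead {v : ℝ → ℝ} (h : XG v) : Lead v := by
  classical
  obtain ⟨s, c, hs, hc, hv⟩ := h
  set ν := s.min' hs with hν
  have hνs : ν ∈ s := s.min'_mem hs
  obtain ⟨θ, hθ, hθ'⟩ : ∃ θ > 0, ∀ α ∈ s.erase ν, θ ≤ α - ν := by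
    by_cases he : (s.erase ν).Nonempty
    · refine ⟨(s.erase ν).min' he - ν, ?_, fun α hα => ?_⟩
      · have h1 := (s.erase ν).min'_mem he
        have h2 := Finset.mem_of_mem_erase h1
        have h3 := Finset.ne_of_mem_erase h1
        have := lt_of_le_of_ne (s.min'_le _ h2) (Ne.symm h3)
        linarith
      · have := (s.erase ν).min'_le _ hα
        linarith
    · refine ⟨1, one_pos, fun α hα => absurd ⟨α, hα⟩ he⟩
  refine ⟨ν, c ν, hc ν hνs, fun x => ∑ α ∈ s.erase ν, c α * x ^ (α - ν), θ, hθ, ?_, 1, one_pos, ?_⟩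
  · exact IsH.sum _ hθ.le (fun α x => c α * x ^ (α - ν)) fun α hα => (IsH.cpow (c α) (α - ν)).mono (hθ' α hα)
  · intro x hx _
    rw [hv x hx, ← Finset.add_sum_erase _ _ hνs, mul_add, Finset.mul_sum]
    congr 1
    · ring
    · refine Finset.sum_congr rfl fun α _ => ?_
      rw [Real.rpow_sub hx]; field_simp

lemma XG.inv {v : ℝ → ℝ} (h : XG v) : XG (fun x => v x⁻¹) := by
  classical
  obtain ⟨s, c, hs, hc, hv⟩ := h
  refine ⟨s.image (fun α => -α), fun α => c (-α), hs.image _, ?_, ?_⟩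
  · intro α hα
    obtain ⟨b, hb, rfl⟩ := Finset.mem_image.1 hα
    simpa using hc b hb
  · intro x hx
    beta_reduce
    rw [hv _ (inv_pos.2 hx), Finset.sum_image (fun a _ b _ h => neg_injective h)]
    refine Finset.sum_congr rfl fun α _ => ?_
    rw [neg_neg, Real.inv_rpow hx.le, Real.rpow_neg hx.le]

lemma XG.smul {v : ℝ → ℝ} (h : XG v) {r : ℝ} (hr : r ≠ 0) : XG (fun x => r * v x) := by
  obtain ⟨s, c, hs, hc, hv⟩ := h
  refine ⟨s, fun α => r * c α, hs, fun α hα => mul_ne_zero hr (hc α hα), fun x hx => ?_⟩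
  beta_reduce
  rw [hv x hx, Finset.mul_sum]
  exact Finset.sum_congr rfl fun α _ => by ring

lemma rpow_analyticAt (α : ℝ) {x : ℝ} (hx : 0 < x) : AnalyticAt ℝ (fun x : ℝ => x ^ α) x := by
  have h : AnalyticAt ℝ (fun x : ℝ => Real.exp (Real.log x * α)) x :=
    ((analyticAt_log hx).fun_mul analyticAt_const).rexp'
  refine h.congr ?_
  filter_upwards [Ioi_mem_nhds hx] with y hy using (Real.rpow_def_of_pos hy α).symm

open Filter Topology in
lemma XG.analytic {v : ℝ → ℝ} (h : XG v) {x : ℝ} (hx : 0 < x) : AnalyticAt ℝ v x := by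
  obtain ⟨s, c, hs, hc, hv⟩ := h
  have : AnalyticAt ℝ (fun x => ∑ α ∈ s, c α * x ^ α) x :=
    Finset.analyticAt_fun_sum _ fun α _ => analyticAt_const.fun_mul (rpow_analyticAt α hx)
  refine this.congr ?_
  filter_upwards [Ioi_mem_nhds hx] with y hy using (hv y hy).symm

open Filter Topology in
lemma Lead.ne {V : ℝ → ℝ} (h : Lead V) : ∀ᶠ ξ in 𝓝[>] (0:ℝ), V ξ ≠ 0 := by
  obtain ⟨ν, c, hc, w, θ, hθ, hw, ε, hε, hV⟩ := h
  obtain ⟨ε1, hε1, C, hC, hb⟩ := hw.bound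
  have ht : Tendsto (fun x : ℝ => C * x ^ θ) (𝓝[>] 0) (𝓝 0) := by
    have := (Real.continuousAt_rpow_const 0 θ (Or.inr hθ.le)).tendsto
    rw [Real.zero_rpow hθ.ne'] at this
    simpa using (this.mono_left nhdsWithin_le_nhds).const_mul C
  filter_upwards [ht.eventually_lt_const (abs_pos.2 hc), Ioc_mem_nhdsGT hε, Ioc_mem_nhdsGT hε1] with x h1 h2 h3
  rw [hV x h2.1 h2.2]
  refine mul_ne_zero (Real.rpow_pos_of_pos h2.1 _).ne' fun h0 => ?_
  have h4 := hb x h3.1 h3.2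
  have h5 : c = - w x := by linarith
  rw [h5, abs_neg] at h1
  linarith

open Filter Topology in
lemma XG.nz {v : ℝ → ℝ} (h : XG v) {x : ℝ} (hx : 0 < x) : ¬ ∀ᶠ y in 𝓝 x, v y = 0 := by
  intro h0
  have ha : AnalyticOnNhd ℝ v (Ioi 0) := fun y hy => h.analytic hy
  have := ha.eqOn_zero_of_preconnected_of_eventuallyEq_zero isPreconnected_Ioi (show x ∈ Ioi 0 from hx) h0
  obtain ⟨ξ, h1, h2⟩ := (h.lead.ne.and self_mem_nhdsWithin).exists
  exact h1 (this h2)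

open Filter Topology in
lemma analytic_lead {V : ℝ → ℝ} (h : AnalyticAt ℝ V 0) (hne : ¬ ∀ᶠ y in 𝓝 0, V y = 0) : Lead V := by
  obtain ⟨n, u, hu, hu0, hV⟩ := h.exists_eventuallyEq_pow_smul_nonzero_iff.2 hne
  obtain ⟨ρ, hρ, a, N, hn, hev⟩ := analytic_ps hu
  have hu0' : u 0 = a 0 := by
    rw [hev 0 (by simpa using hρ.le), evS, tsum_eq_single 0]
    · simp
    · intro k hk; simp [hk]
  obtain ⟨r, hr, hr'⟩ := Metric.eventually_nhds_iff.1 hV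
  have hab : ∀ ξ : ℝ, 0 < ξ → |ξ| = ξ := fun ξ h => abs_of_pos h
  refine ⟨n, u 0, hu0, fun ξ => u ξ - u 0, 1, one_pos, ?_, r / 2, by linarith, ?_⟩
  · refine ⟨ℕ, fun k => a (k + 1), fun k => (k : ℝ) + 1, ρ, hρ, fun k => by simp, ?_, ?_, ?_⟩
    · intro M
      refine (Set.finite_Iic (Nat.ceil M)).subset fun k hk => ?_
      have : (k : ℝ) + 1 ≤ M := hk
      have h2 : (k : ℝ) ≤ Nat.ceil M := by have := Nat.le_ceil M; linarith
      exact_mod_cast h2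
    · refine ((summable_nat_add_iff 1).2 hn.1).congr fun k => ?_
      beta_reduce
      rw [← Nat.cast_succ, Real.rpow_natCast]
    · intro x hx hx'
      have hz : |x| ≤ ρ := by rw [hab x hx]; exact hx'
      have h1 := (hn.summ hz).of_norm.hasSum
      have h2 := (hasSum_nat_add_iff' 1).2 h1
      simp only [Finset.range_one, Finset.sum_singleton, pow_zero, mul_one] at h2
      beta_reduce
      rw [hev x hz, hu0', evS]
      have hfe : (fun k : ℕ => a (k + 1) * x ^ ((k : ℝ) + 1)) = fun n => a (n + 1) * x ^ (n + 1) := by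
        funext k
        rw [← Nat.cast_succ, Real.rpow_natCast]
      rw [hfe]
      exact h2
  · intro ξ hξ hξ'
    rw [hr' (by rw [dist_zero_right, Real.norm_eq_abs, hab ξ hξ]; linarith), Real.rpow_natCast]
    simp

def IsCoord (Ξ : ℝ → ℝ) : Prop :=
  ContinuousOn Ξ (Ioi 0) ∧ ∀ v, XG v → ∃ ν c : ℝ, c ≠ 0 ∧ ∃ (w : ℝ → ℝ) (θ : ℝ), 0 < θ ∧ IsH θ w ∧
    ∃ ε > 0, ∀ x, 0 < x → 0 < Ξ x → Ξ x ≤ ε → v x = (Ξ x) ^ ν * (c + w (Ξ x))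

lemma coord_of {Ξ : ℝ → ℝ} (hc : ContinuousOn Ξ (Ioi 0)) (J : ℝ → ℝ) (hJ : ∀ x, 0 < x → J (Ξ x) = x)
    (h : ∀ v, XG v → Lead (fun ξ => v (J ξ))) : IsCoord Ξ := by
  refine ⟨hc, fun v hv => ?_⟩
  obtain ⟨ν, c, hc, w, θ, hθ, hw, ε, hε, hV⟩ := h v hv
  refine ⟨ν, c, hc, w, θ, hθ, hw, ε, hε, fun x hx h1 h2 => ?_⟩
  have := hV _ h1 h2
  simp only [hJ x hx] at this
  exact this

lemma coord_id : IsCoord (fun x => x) := coord_of continuousOn_id (fun x => x) (fun _ _ => rfl) fun _ hv => hv.lead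

lemma coord_inv : IsCoord (fun x => x⁻¹) :=
  coord_of (continuousOn_inv₀.mono fun x (hx : 0 < x) => hx.ne') (fun x => x⁻¹) (fun x _ => inv_inv x) fun _ hv => hv.inv.lead

open Filter Topology in
lemma coord_right {x0 : ℝ} (h0 : 0 < x0) : IsCoord (fun x => x - x0) := by
  refine coord_of (by fun_prop) (fun ξ => x0 + ξ) (fun x _ => by ring) fun v hv => ?_
  have ha : AnalyticAt ℝ (fun ξ : ℝ => x0 + ξ) 0 := analyticAt_const.fun_add analyticAt_id
  refine analytic_lead (AnalyticAt.fun_comp (by simpa using hv.analytic h0) ha) fun hz => hv.nz h0 ?_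
  have : Tendsto (fun x => x - x0) (𝓝 x0) (𝓝 0) := by
    have : ContinuousAt (fun x => x - x0) x0 := by fun_prop
    simpa [ContinuousAt] using this
  filter_upwards [this.eventually hz] with y hy
  simpa using hy

open Filter Topology in
lemma coord_left {x0 : ℝ} (h0 : 0 < x0) : IsCoord (fun x => x0 - x) := by
  refine coord_of (by fun_prop) (fun ξ => x0 - ξ) (fun x _ => by ring) fun v hv => ?_
  have ha : AnalyticAt ℝ (fun ξ : ℝ => x0 - ξ) 0 := analyticAt_const.fun_sub analyticAt_id
  refine analytic_lead (AnalyticAt.fun_comp (by simpa using hv.analytic h0) ha) fun hz => hv.nz h0 ?_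
  have : Tendsto (fun x => x0 - x) (𝓝 x0) (𝓝 0) := by
    have : ContinuousAt (fun x => x0 - x) x0 := by fun_prop
    simpa [ContinuousAt] using this
  filter_upwards [this.eventually hz] with y hy
  simpa using hy

end P3a

section P3b
structure YP where
  S : Finset ℝ
  κ : ℝ → ℝ → ℝ
  hκ : ∀ β ∈ S, XG (κ β)

def YP.ev (f : YP) (x y : ℝ) : ℝ := ∑ β ∈ f.S, f.κ β x * y ^ β

open Filter Topology

lemma YP.cont (f : YP) {x y : ℝ} (hx : 0 < x) (hy : 0 < y) :
    ContinuousAt (fun p : ℝ × ℝ => f.ev p.1 p.2) (x, y) := by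
  unfold YP.ev
  refine tendsto_finsetSum _ fun β hβ => ?_
  have h1 : ContinuousAt (fun p : ℝ × ℝ => f.κ β p.1) (x, y) :=
    ContinuousAt.comp (f := Prod.fst) (g := f.κ β) ((f.hκ β hβ).analytic hx).continuousAt continuousAt_fst
  have h2 : ContinuousAt (fun p : ℝ × ℝ => p.2 ^ β) (x, y) :=
    ContinuousAt.rpow_const continuousAt_snd (Or.inl hy.ne')
  exact h1.mul h2

lemma exists_pos_lb {K : Type} [Finite K] (r : K → ℝ) (hr : ∀ k, 0 < r k) : ∃ ε > 0, ∀ k, ε ≤ r k := by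
  have e1 : ∀ᶠ ρ in 𝓝[>] (0 : ℝ), ∀ k, ρ ≤ r k := by
    rw [eventually_all]
    intro k
    filter_upwards [Ioc_mem_nhdsGT (hr k)] with ρ h using h.2
  obtain ⟨ρ, h1, h2⟩ := (e1.and self_mem_nhdsWithin).exists
  exact ⟨ρ, h2, h1⟩

lemma LOC {Ξ : ℝ → ℝ} (hΞ : IsCoord Ξ) (f g : YP) (hf : f.S.Nonempty) (μ c : ℝ) (hc : 0 < c) :
    ∃ ρ > 0, ∃ ε > 0, ∀ x, 0 < x → 0 < Ξ x → Ξ x < ε → ∀ y, 0 < y → |y / Ξ x ^ μ - c| < ρ →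
      f.ev x y = 0 → g.ev x y = 0 → ∀ᶠ p in 𝓝 (x, y), f.ev p.1 p.2 = 0 → g.ev p.1 p.2 = 0 := by
  classical
  choose ν cf hcf w θ hθ hw εf hεf hvf using fun β : f.S => hΞ.2 _ (f.hκ β β.2)
  choose ν' cg hcg w' θ' hθ' hw' εg hεg hvg using fun β : g.S => hΞ.2 _ (g.hκ β β.2)
  obtain ⟨e1, he1, he1'⟩ := exists_pos_lb εf hεf
  obtain ⟨e2, he2, he2'⟩ := exists_pos_lb εg hεg
  obtain ⟨θ1, hθ1, hθ1'⟩ := exists_pos_lb θ hθ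
  -- minimal exponent for f
  haveI : Nonempty f.S := hf.to_subtype
  obtain ⟨βm, hβm⟩ := Finite.exists_min (fun β : f.S => ν β + μ * β)
  set m0 := ν βm + μ * βm with hm0
  obtain ⟨N', hN'⟩ : ∃ N', ∀ β : g.S, N' ≤ ν' β + μ * β := by
    obtain ⟨b, hb⟩ := (Set.finite_range (fun β : g.S => ν' β + μ * β)).bddBelow
    exact ⟨b, fun β => hb ⟨β, rfl⟩⟩
  let d : f.S → ℝ := fun β => ν β + μ * β - m0
  have hd : ∀ β, 0 ≤ d β := fun β => sub_nonneg.2 (hβm β)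
  obtain ⟨θ2, hθ2, hθ2'⟩ := exists_pos_lb (fun β : f.S => if d β = 0 then 1 else d β) (fun β => by
    split_ifs with h
    · exact one_pos
    · exact lt_of_le_of_ne (hd β) (Ne.symm h))
  set Θ := min θ1 θ2 with hΘ
  have hΘ0 : 0 < Θ := lt_min hθ1 hθ2
  let F0 : ℝ → ℝ := fun z => ∑ β : f.S, (if d β = 0 then cf β else 0) * (c + z) ^ (β : ℝ)
  let Ah : f.S → ℝ → ℝ := fun β ξ => if d β = 0 then w β ξ else (1 * ξ ^ d β) * (cf β + w β ξ)
  let P : f.S → ℝ → ℝ := fun β z => (c + z) ^ (β : ℝ)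
  let B : g.S → ℝ → ℝ := fun β ξ => (1 * ξ ^ (ν' β + μ * β - N')) * (cg β + w' β ξ)
  let Q : g.S → ℝ → ℝ := fun β z => (c + z) ^ (β : ℝ)
  have hana : ∀ β : ℝ, AnalyticAt ℝ (fun z : ℝ => (c + z) ^ β) 0 := fun β => by
    have ha : AnalyticAt ℝ (fun ξ : ℝ => c + ξ) 0 := analyticAt_const.fun_add analyticAt_id
    exact AnalyticAt.fun_comp (g := fun y : ℝ => y ^ β) (by simpa using rpow_analyticAt β hc) ha
  have hF0 : AnalyticAt ℝ F0 0 :=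
    Finset.analyticAt_fun_sum _ fun β _ => analyticAt_const.fun_mul (hana β)
  have hXG : XG (fun y => ∑ β : f.S, (if d β = 0 then cf β else 0) * y ^ (β : ℝ)) := by
    refine ⟨(Finset.univ.filter fun β : f.S => d β = 0).image Subtype.val,
      fun b => if h : b ∈ f.S then cf ⟨b, h⟩ else 0, ?_, ?_, ?_⟩
    · exact ⟨βm, Finset.mem_image.2 ⟨βm, by simp [d, hm0], rfl⟩⟩
    · intro α hα
      obtain ⟨β, hβ, rfl⟩ := Finset.mem_image.1 hα
      simp [hcf]
    · intro x _
      beta_reduce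
      rw [Finset.sum_image (fun a _ b _ h => Subtype.ext h), Finset.sum_filter]
      refine Finset.sum_congr rfl fun β _ => ?_
      by_cases h : d β = 0 <;> simp [h]
  have hne : ¬ ∀ᶠ z in 𝓝 0, F0 z = 0 := by
    intro h0
    refine hXG.nz hc ?_
    have : Tendsto (fun x => x - c) (𝓝 c) (𝓝 0) := by
      have : ContinuousAt (fun x => x - c) c := by fun_prop
      simpa [ContinuousAt] using this
    filter_upwards [this.eventually h0] with y hy
    simpa [F0] using hy
  have hAh : ∀ β, IsH Θ (Ah β) := by
    intro β
    by_cases h : d β = 0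
    · have : Ah β = w β := by funext ξ; simp [Ah, h]
      rw [this]
      exact (hw β).mono ((min_le_left _ _).trans (hθ1' β))
    · have h2 := hθ2' β
      simp only [if_neg h] at h2
      have h1 := IsH.mul (hd β) le_rfl (IsH.cpow 1 (d β)) (IsH.add le_rfl (IsH.const (cf β)) ((hw β).mono (hθ β).le))
      rw [add_zero] at h1
      refine (h1.mono ((min_le_right _ _).trans h2)).congr hΘ0.le one_pos fun ξ _ _ => ?_
      simp [Ah, h]
  have hB : ∀ β, IsH 0 (B β) := by
    intro β
    have h1 := IsH.mul (sub_nonneg.2 (hN' β)) le_rfl (IsH.cpow 1 (ν' β + μ * β - N'))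
      (IsH.add le_rfl (IsH.const (cg β)) ((hw' β).mono (hθ' β).le))
    rw [add_zero] at h1
    exact h1.mono (sub_nonneg.2 (hN' β))
  obtain ⟨ρ, hρ, ε, hε, c1, hc1, ν1, hgap⟩ := GAP F0 P hF0 hne (fun β => hana β) Ah hΘ0 hAh B Q hB (fun β => hana β)
  have hrep : ∀ x, 0 < x → 0 < Ξ x → ∀ y, 0 < y → |y / Ξ x ^ μ - c| < c → ∀ β : ℝ,
      y ^ β = Ξ x ^ (μ * β) * (c + (y / Ξ x ^ μ - c)) ^ β := by
    intro x hx hξ y hy _ β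
    rw [add_sub_cancel, Real.div_rpow hy.le (Real.rpow_nonneg hξ.le _), Real.rpow_mul hξ.le]
    have : 0 < (Ξ x ^ μ) ^ β := Real.rpow_pos_of_pos (Real.rpow_pos_of_pos hξ _) _
    field_simp
  have hfe : ∀ x, 0 < x → 0 < Ξ x → Ξ x ≤ e1 → ∀ y, 0 < y → |y / Ξ x ^ μ - c| < c →
      f.ev x y = Ξ x ^ m0 * (F0 (y / Ξ x ^ μ - c) + ∑ β, Ah β (Ξ x) * P β (y / Ξ x ^ μ - c)) := by
    intro x hx hξ hξ' y hy hz
    simp only [F0]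
    rw [← Finset.sum_add_distrib, YP.ev, ← Finset.sum_coe_sort f.S, Finset.mul_sum]
    refine Finset.sum_congr rfl fun β _ => ?_
    rw [hrep x hx hξ y hy hz, hvf β x hx hξ (hξ'.trans (he1' β))]
    have hpw : Ξ x ^ ν β * Ξ x ^ (μ * β) = Ξ x ^ m0 * Ξ x ^ d β := by
      rw [← Real.rpow_add hξ, ← Real.rpow_add hξ]; congr 1; simp [d]
    have : Ξ x ^ ν β * (cf β + w β (Ξ x)) * (Ξ x ^ (μ * β) * (c + (y / Ξ x ^ μ - c)) ^ (β : ℝ)) =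
       (Ξ x ^ ν β * Ξ x ^ (μ * β)) * ((cf β + w β (Ξ x)) * (c + (y / Ξ x ^ μ - c)) ^ (β : ℝ)) := by ring
    rw [this, hpw]
    by_cases h : d β = 0
    · simp only [Ah, P, h, if_true, Real.rpow_zero]; ring
    · simp only [Ah, P, h, if_false]; ring
  have hge : ∀ x, 0 < x → 0 < Ξ x → Ξ x ≤ e2 → ∀ y, 0 < y → |y / Ξ x ^ μ - c| < c →
      g.ev x y = Ξ x ^ N' * ∑ β, B β (Ξ x) * Q β (y / Ξ x ^ μ - c) := by
    intro x hx hξ hξ' y hy hz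
    rw [YP.ev, ← Finset.sum_coe_sort g.S, Finset.mul_sum]
    refine Finset.sum_congr rfl fun β _ => ?_
    rw [hrep x hx hξ y hy hz, hvg β x hx hξ (hξ'.trans (he2' β))]
    have hpw : Ξ x ^ ν' β * Ξ x ^ (μ * β) = Ξ x ^ N' * Ξ x ^ (ν' β + μ * β - N') := by
      rw [← Real.rpow_add hξ, ← Real.rpow_add hξ]; congr 1; ring
    have : Ξ x ^ ν' β * (cg β + w' β (Ξ x)) * (Ξ x ^ (μ * β) * (c + (y / Ξ x ^ μ - c)) ^ (β : ℝ)) =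
       (Ξ x ^ ν' β * Ξ x ^ (μ * β)) * ((cg β + w' β (Ξ x)) * (c + (y / Ξ x ^ μ - c)) ^ (β : ℝ)) := by ring
    rw [this, hpw]
    simp only [B, Q]; ring
  refine ⟨min ρ c, lt_min hρ hc, min ε (min e1 e2), by positivity, ?_⟩
  intro x hx hξ hξlt y hy hz hfz hgz
  have cΞ : ContinuousAt (fun p : ℝ × ℝ => Ξ p.1) (x, y) :=
    ContinuousAt.comp (f := Prod.fst) (g := Ξ) (hΞ.1.continuousAt (Ioi_mem_nhds hx)) continuousAt_fst
  have cμ : ∀ r : ℝ, ContinuousAt (fun p : ℝ × ℝ => Ξ p.1 ^ r) (x, y) := fun r =>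
    ContinuousAt.rpow_const cΞ (Or.inl hξ.ne')
  have cz : ContinuousAt (fun p : ℝ × ℝ => |p.2 / Ξ p.1 ^ μ - c|) (x, y) :=
    ((continuousAt_snd.div (cμ μ) (Real.rpow_pos_of_pos hξ _).ne').sub continuousAt_const).abs
  have cg' : ContinuousAt (fun p : ℝ × ℝ => |Ξ p.1 ^ (-N') * g.ev p.1 p.2|) (x, y) :=
    ((cμ _).mul (g.cont hx hy)).abs
  have h0 : |Ξ x ^ (-N') * g.ev x y| = 0 := by rw [hgz]; simp
  have q1 : ∀ᶠ p : ℝ × ℝ in 𝓝 (x, y), 0 < p.1 := continuousAt_fst.eventually_const_lt hx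
  have q2 : ∀ᶠ p : ℝ × ℝ in 𝓝 (x, y), 0 < p.2 := continuousAt_snd.eventually_const_lt hy
  have q3 : ∀ᶠ p : ℝ × ℝ in 𝓝 (x, y), 0 < Ξ p.1 := cΞ.eventually_const_lt hξ
  have q4 : ∀ᶠ p : ℝ × ℝ in 𝓝 (x, y), Ξ p.1 < min ε (min e1 e2) := cΞ.eventually_lt_const hξlt
  have q5 : ∀ᶠ p : ℝ × ℝ in 𝓝 (x, y), |p.2 / Ξ p.1 ^ μ - c| < min ρ c := cz.eventually_lt_const hz
  have q6 : ∀ᶠ p : ℝ × ℝ in 𝓝 (x, y), |Ξ p.1 ^ (-N') * g.ev p.1 p.2| < 1 :=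
    cg'.eventually_lt_const (by simp only; rw [h0]; exact one_pos)
  have q7 : ∀ᶠ p : ℝ × ℝ in 𝓝 (x, y), |Ξ p.1 ^ (-N') * g.ev p.1 p.2| < c1 * Ξ p.1 ^ ν1 := by
    refine cg'.eventually_lt (continuousAt_const.mul (cμ ν1)) ?_
    simp only
    rw [h0]
    exact mul_pos hc1 (Real.rpow_pos_of_pos hξ _)
  filter_upwards [q1, q2, q3, q4, q5, q6, q7] with p p1 p2 p3 p4 p5 p6 p7 hfp
  have hz' := p5.trans_le (min_le_right _ _)
  rw [hfe p.1 p1 p3 (p4.le.trans ((min_le_right _ _).trans (min_le_left _ _))) p.2 p2 hz'] at hfp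
  have hgp := hge p.1 p1 p3 (p4.le.trans ((min_le_right _ _).trans (min_le_right _ _))) p.2 p2 hz'
  have hN : Ξ p.1 ^ (-N') * g.ev p.1 p.2 = ∑ β, B β (Ξ p.1) * Q β (p.2 / Ξ p.1 ^ μ - c) := by
    rw [hgp, ← mul_assoc, ← Real.rpow_add p3]; simp
  rw [hN] at p6 p7
  have hFp := (mul_eq_zero.1 hfp).resolve_left (Real.rpow_pos_of_pos p3 _).ne'
  rw [hgp, hgap (Ξ p.1) _ p3 (p4.le.trans (min_le_left _ _)) (p5.le.trans (min_le_left _ _)) hFp p6 p7, mul_zero]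

end P3b

section P3c
open Filter Topology

lemma dom_ratio {K : Type} [Fintype K] [Nonempty K] (t e : K → ℝ) (ht : ∀ k, 0 < t k) {a M : ℝ} (ha : 0 < a)
    (hM : 0 < M) (h1 : ∀ k, a ≤ |e k|) (h2 : ∀ k, |e k| ≤ M) (h0 : ∑ k, e k * t k = 0) :
    ∃ p : K × K, p.1 ≠ p.2 ∧ t p.2 / t p.1 ≤ 1 ∧ a / (M * Fintype.card K) ≤ t p.2 / t p.1 := by
  classical
  obtain ⟨k0, hk0⟩ := Finite.exists_max t
  by_contra! hcon
  have hN : (0:ℝ) < Fintype.card K := by exact_mod_cast Fintype.card_pos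
  have hlt : ∀ k ∈ Finset.univ.erase k0, |e k * t k| ≤ a / Fintype.card K * t k0 := by
    intro k hk
    have hne := Finset.ne_of_mem_erase hk
    have := hcon (k0, k) (Ne.symm hne) ((div_le_one (ht _)).2 (hk0 k))
    simp only [div_lt_iff₀ (ht k0)] at this
    rw [abs_mul, abs_of_pos (ht k)]
    calc |e k| * t k ≤ M * (a / (M * Fintype.card K) * t k0) :=
          mul_le_mul (h2 k) this.le (ht k).le hM.le
      _ = _ := by field_simp
  rw [← Finset.add_sum_erase _ _ (Finset.mem_univ k0)] at h0
  have h3 : |e k0 * t k0| ≤ ((Fintype.card K : ℝ) - 1) * (a / Fintype.card K * t k0) := by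
    rw [eq_neg_of_add_eq_zero_left h0, abs_neg]
    refine (Finset.abs_sum_le_sum_abs _ _).trans ((Finset.sum_le_card_nsmul _ _ _ hlt).trans ?_)
    rw [Finset.card_erase_of_mem (Finset.mem_univ _), Finset.card_univ, nsmul_eq_mul,
      Nat.cast_pred Fintype.card_pos]
  rw [abs_mul, abs_of_pos (ht k0)] at h3
  have h4 : a * t k0 ≤ |e k0| * t k0 := mul_le_mul_of_nonneg_right (h1 k0) (ht k0).le
  have h5 : ((Fintype.card K : ℝ) - 1) * (a / Fintype.card K * t k0) = a * t k0 - a / Fintype.card K * t k0 := by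
    field_simp
  have h6 : 0 < a / Fintype.card K * t k0 := mul_pos (div_pos ha hN) (ht k0)
  linarith

lemma STAR {Ξ : ℝ → ℝ} (hΞ : IsCoord Ξ) (f g : YP) (hf : f.S.Nonempty) :
    ∃ ε > 0, ∀ x, 0 < x → 0 < Ξ x → Ξ x < ε → ∀ y, 0 < y →
      f.ev x y = 0 → g.ev x y = 0 → ∀ᶠ p in 𝓝 (x, y), f.ev p.1 p.2 = 0 → g.ev p.1 p.2 = 0 := by
  classical
  by_contra! hcon
  choose ν cf hcf w θ hθ hw εf hεf hvf using fun β : f.S => hΞ.2 _ (f.hκ β β.2)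
  have : Nonempty f.S := hf.to_subtype
  choose X hX hξ hξs Y hY hfz hgz hbad using fun n : ℕ => hcon (1 / ((n:ℝ) + 1)) (by positivity)
  set U := hyperfilter ℕ
  have hUle : (U : Filter ℕ) ≤ atTop := Nat.hyperfilter_le_atTop
  have hlim : Tendsto (fun n => Ξ (X n)) U (𝓝 0) := by
    refine Tendsto.mono_left ?_ hUle
    exact squeeze_zero (fun n => (hξ n).le) (fun n => (hξs n).le) tendsto_one_div_add_atTop_nhds_zero_nat
  have hev : ∀ r > 0, ∀ᶠ n in (U : Filter ℕ), Ξ (X n) < r := fun r hr => hlim.eventually_lt_const hr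
  obtain ⟨a, ha, ha'⟩ := exists_pos_lb (fun β => |cf β| / 2) (fun β => by have := abs_pos.2 (hcf β); positivity)
  obtain ⟨M, hM⟩ : ∃ M, ∀ β, |cf β| ≤ M := by
    obtain ⟨b, hb⟩ := (Set.finite_range (fun β => |cf β|)).bddAbove
    exact ⟨b, fun β => hb ⟨β, rfl⟩⟩
  have hM0 : 0 ≤ M := (abs_nonneg _).trans (hM (Classical.arbitrary _))
  have hwev : ∀ β, ∀ᶠ n in (U : Filter ℕ), |w β (Ξ (X n))| < a := by
    intro β
    obtain ⟨ε1, hε1, C, hC, hb⟩ := (hw β).bound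
    have ht : Tendsto (fun n => C * Ξ (X n) ^ θ β) U (𝓝 0) := by
      have := ((Real.continuousAt_rpow_const 0 (θ β) (Or.inr (hθ β).le)).tendsto.comp hlim).const_mul C
      rwa [Real.zero_rpow (hθ β).ne', mul_zero] at this
    filter_upwards [ht.eventually_lt_const ha, hev ε1 hε1] with n h1 h2
    exact (hb _ (hξ n) h2.le).trans_lt h1
  let t : f.S → ℕ → ℝ := fun β n => Ξ (X n) ^ ν β * Y n ^ (β : ℝ)
  have ht : ∀ β n, 0 < t β n := fun β n => mul_pos (Real.rpow_pos_of_pos (hξ n) _) (Real.rpow_pos_of_pos (hY n) _)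
  set η := a / ((M + a) * Fintype.card f.S) with hη
  have hη0 : 0 < η := by
    have : (0:ℝ) < Fintype.card f.S := by exact_mod_cast Fintype.card_pos
    positivity
  have hex : ∀ᶠ n in (U : Filter ℕ), ∃ p : f.S × f.S, p.1 ≠ p.2 ∧ t p.2 n / t p.1 n ≤ 1 ∧ η ≤ t p.2 n / t p.1 n := by
    filter_upwards [eventually_all.2 hwev, eventually_all.2 fun β => hev (εf β) (hεf β)] with n h1 h2
    refine dom_ratio (fun β => t β n) (fun β => cf β + w β (Ξ (X n))) (fun β => ht β n) ha (by positivity) ?_ ?_ ?_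
    · intro β
      have h3 := abs_sub_abs_le_abs_sub (cf β) (-w β (Ξ (X n)))
      rw [abs_neg, sub_neg_eq_add] at h3
      have := ha' β
      have := h1 β
      linarith
    · intro β
      exact (abs_add_le _ _).trans (add_le_add (hM β) (h1 β).le)
    · have := hfz n
      rw [YP.ev, ← Finset.sum_coe_sort f.S] at this
      rw [← this]
      refine Finset.sum_congr rfl fun β _ => ?_
      rw [hvf β _ (hX n) (hξ n) (h2 β).le]
      simp only [t]; ring
  obtain ⟨⟨β0, β1⟩, hp⟩ : ∃ p : f.S × f.S, ∀ᶠ n in (U : Filter ℕ), p.1 ≠ p.2 ∧ t p.2 n / t p.1 n ≤ 1 ∧ η ≤ t p.2 n / t p.1 n := by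
    by_contra! hno
    obtain ⟨n, ⟨p, hp⟩, h2⟩ := (hex.and (eventually_all.2 hno)).exists
    exact absurd (h2 p hp.1 hp.2.1) (not_lt.2 hp.2.2)
  simp only at hp
  have hne : (β0 : ℝ) ≠ β1 := by
    obtain ⟨n, hn⟩ := hp.exists
    exact fun h => hn.1 (Subtype.ext h)
  have hb : (β1 : ℝ) - β0 ≠ 0 := sub_ne_zero.2 hne.symm
  obtain ⟨r, hr, hrt⟩ : ∃ r ∈ Icc η 1, Tendsto (fun n => t β1 n / t β0 n) U (𝓝 r) := by
    obtain ⟨r, hr, h⟩ := (isCompact_Icc (a := η) (b := 1)).ultrafilter_le_nhds' (U.map fun n => t β1 n / t β0 n)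
      (by rw [Ultrafilter.mem_map]; filter_upwards [hp] with n hn using ⟨hn.2.2, hn.2.1⟩)
    exact ⟨r, hr, h⟩
  have hr0 : 0 < r := hη0.trans_le hr.1
  set μ := -((ν β1 - ν β0) / ((β1 : ℝ) - β0)) with hμ
  have hy : ∀ n, Y n / Ξ (X n) ^ μ = (t β1 n / t β0 n) ^ ((β1 : ℝ) - β0)⁻¹ := by
    intro n
    have e1 : t β1 n / t β0 n = Ξ (X n) ^ (ν β1 - ν β0) * Y n ^ ((β1 : ℝ) - β0) := by
      rw [Real.rpow_sub (hξ n), Real.rpow_sub (hY n)]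
      simp only [t]
      field_simp
    rw [e1, Real.mul_rpow (Real.rpow_nonneg (hξ n).le _) (Real.rpow_nonneg (hY n).le _), ← Real.rpow_mul (hξ n).le,
      ← Real.rpow_mul (hY n).le, mul_inv_cancel₀ hb, Real.rpow_one, hμ, Real.rpow_neg (hξ n).le, div_inv_eq_mul,
      ← div_eq_mul_inv, mul_comm]
  have hlimy : Tendsto (fun n => |Y n / Ξ (X n) ^ μ - r ^ ((β1 : ℝ) - β0)⁻¹|) U (𝓝 0) := by
    simp_rw [hy]
    have h1 := (Real.continuousAt_rpow_const r ((β1 : ℝ) - β0)⁻¹ (Or.inl hr0.ne')).tendsto.comp hrt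
    have h2 := (h1.sub_const (r ^ ((β1 : ℝ) - β0)⁻¹)).abs
    simpa using h2
  obtain ⟨ρ, hρ, ε, hε, hloc⟩ := LOC hΞ f g hf μ _ (Real.rpow_pos_of_pos hr0 ((β1 : ℝ) - β0)⁻¹)
  obtain ⟨n, h1, h2⟩ := ((hlimy.eventually_lt_const hρ).and (hev ε hε)).exists
  have := hloc (X n) (hX n) (hξ n) h2 (Y n) (hY n) h1 (hfz n) (hgz n)
  obtain ⟨p, hp1, hp2⟩ := ((hbad n).and_eventually this).exists
  exact hp1.2 (hp2 hp1.1)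

end P3c

section P3d
open Filter Topology

/-- generalized polynomials with repetition allowed -/
def GP (a : ℝ → ℝ → ℝ) : Prop :=
  ∃ p : (ℝ × ℝ) →₀ ℝ, ∀ x y, 0 < x → 0 < y →
    a x y = Finsupp.linearCombination ℝ (fun α : ℝ × ℝ => x ^ α.1 * y ^ α.2) p

lemma GP.add {a b : ℝ → ℝ → ℝ} (ha : GP a) (hb : GP b) : GP (fun x y => a x y + b x y) := by
  obtain ⟨p, hp⟩ := ha
  obtain ⟨q, hq⟩ := hb
  exact ⟨p + q, fun x y hx hy => by beta_reduce; rw [map_add, hp x y hx hy, hq x y hx hy]⟩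

lemma GP.smul {a : ℝ → ℝ → ℝ} (r : ℝ) (ha : GP a) : GP (fun x y => r * a x y) := by
  obtain ⟨p, hp⟩ := ha
  exact ⟨r • p, fun x y hx hy => by beta_reduce; rw [map_smul, hp x y hx hy, smul_eq_mul]⟩

lemma GP.zero : GP (fun _ _ => 0) := ⟨0, fun x y _ _ => by simp⟩

lemma GP.sub {a b : ℝ → ℝ → ℝ} (ha : GP a) (hb : GP b) : GP (fun x y => a x y - b x y) := by
  have := ha.add (hb.smul (-1))
  simpa [sub_eq_add_neg] using this

lemma GP.sum {K : Type*} (s : Finset K) (a : K → ℝ → ℝ → ℝ) (ha : ∀ k ∈ s, GP (a k)) :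
    GP (fun x y => ∑ k ∈ s, a k x y) := by
  classical
  induction s using Finset.induction_on with
  | empty => simpa using GP.zero
  | insert k s hk ih =>
    simp only [Finset.sum_insert hk]
    exact (ha k (Finset.mem_insert_self _ _)).add (ih fun j hj => ha j (Finset.mem_insert_of_mem hj))

lemma GP.ymul {a : ℝ → ℝ → ℝ} (s : ℝ) (ha : GP a) : GP (fun x y => y ^ s * a x y) := by
  obtain ⟨p, hp⟩ := ha
  refine ⟨p.mapDomain (fun α => (α.1, s + α.2)), fun x y hx hy => ?_⟩
  beta_reduce
  rw [Finsupp.linearCombination_mapDomain, hp x y hx hy, Finsupp.linearCombination_apply,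
    Finsupp.linearCombination_apply, Finsupp.sum, Finsupp.sum, Finset.mul_sum]
  refine Finset.sum_congr rfl fun α _ => ?_
  simp only [Function.comp, smul_eq_mul, Real.rpow_add hy]
  ring

lemma GP.mono (c α β : ℝ) : GP (fun x y => c * x ^ α * y ^ β) :=
  ⟨Finsupp.single (α, β) c, fun x y _ _ => by simp [Finsupp.linearCombination_single, mul_assoc]⟩

lemma GP.yinv {a : ℝ → ℝ → ℝ} (ha : GP a) : GP (fun x y => a x y⁻¹) := by
  obtain ⟨p, hp⟩ := ha
  refine ⟨p.mapDomain (fun α => (α.1, -α.2)), fun x y hx hy => ?_⟩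
  beta_reduce
  rw [Finsupp.linearCombination_mapDomain, hp x y⁻¹ hx (inv_pos.2 hy), Finsupp.linearCombination_apply,
    Finsupp.linearCombination_apply, Finsupp.sum, Finsupp.sum]
  refine Finset.sum_congr rfl fun α _ => ?_
  simp only [Function.comp, Real.rpow_neg hy.le, Real.inv_rpow hy.le]

lemma GP.isGenPoly {a : ℝ → ℝ → ℝ} (ha : GP a) : IsGenPoly (fun z => a z.1.1 z.1.2) := by
  obtain ⟨p, hp⟩ := ha
  refine ⟨p.support.card, fun i => p (p.support.equivFin.symm i), fun i => p.support.equivFin.symm i,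
    fun i => ?_, fun i j h => ?_, fun z => ?_⟩
  · exact Finsupp.mem_support_iff.1 (p.support.equivFin.symm i).2
  · exact p.support.equivFin.symm.injective (Subtype.ext h)
  · beta_reduce
    rw [hp _ _ z.2.1 z.2.2, Finsupp.linearCombination_apply, Finsupp.sum, ← Finset.sum_coe_sort,
      ← Equiv.sum_comp p.support.equivFin.symm]
    exact Finset.sum_congr rfl fun i _ => by rw [smul_eq_mul, mul_assoc]

lemma GP.of_isGenPoly {a : PQ → ℝ} (ha : IsGenPoly a) :
    ∃ b, GP b ∧ ∀ z : PQ, a z = b z.1.1 z.1.2 := by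
  obtain ⟨m, c, α, _, _, h⟩ := ha
  exact ⟨_, GP.sum Finset.univ (fun i x y => c i * x ^ (α i).1 * y ^ (α i).2) fun i _ => GP.mono _ _ _, h⟩

lemma GP.yp {a : ℝ → ℝ → ℝ} (ha : GP a) : ∃ f : YP, ∀ x y, 0 < x → 0 < y → a x y = f.ev x y := by
  classical
  obtain ⟨p, hp⟩ := ha
  refine ⟨⟨p.support.image Prod.snd, fun β x => ∑ α ∈ p.support.filter (fun α => α.2 = β), p α * x ^ α.1, ?_⟩, ?_⟩
  · intro β hβ
    obtain ⟨α, hα, rfl⟩ := Finset.mem_image.1 hβ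
    refine ⟨(p.support.filter (fun q => q.2 = α.2)).image Prod.fst, fun r => p (r, α.2), ?_, ?_, ?_⟩
    · exact ⟨α.1, Finset.mem_image.2 ⟨α, by simpa using hα, rfl⟩⟩
    · intro r hr
      obtain ⟨q, hq, rfl⟩ := Finset.mem_image.1 hr
      rw [Finset.mem_filter] at hq
      rw [← hq.2]
      exact Finsupp.mem_support_iff.1 hq.1
    · intro x _
      rw [Finset.sum_image]
      · refine Finset.sum_congr rfl fun q hq => ?_
        rw [Finset.mem_filter] at hq
        rw [← hq.2]
      · intro q hq q' hq' h
        simp only [Finset.coe_filter, Set.mem_ofPred_eq] at hq hq'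
        exact Prod.ext h (hq.2.trans hq'.2.symm)
  · intro x y hx hy
    rw [hp x y hx hy, YP.ev, Finsupp.linearCombination_apply, Finsupp.sum,
      ← Finset.sum_fiberwise_of_maps_to (fun α hα => Finset.mem_image_of_mem Prod.snd hα)]
    refine Finset.sum_congr rfl fun β _ => ?_
    simp only
    rw [Finset.sum_mul]
    refine Finset.sum_congr rfl fun α hα => ?_
    rw [Finset.mem_filter] at hα
    rw [smul_eq_mul, ← hα.2, mul_assoc]

lemma YP.gp (f : YP) : GP f.ev := by
  have key : ∀ β ∈ f.S, GP (fun x y => f.κ β x * y ^ β) := by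
    intro β hβ
    obtain ⟨s, c, _, _, h⟩ := f.hκ β hβ
    obtain ⟨p, hp⟩ := GP.sum s (fun α x y => c α * x ^ α * y ^ β) fun α _ => GP.mono (c α) α β
    refine ⟨p, fun x y hx hy => ?_⟩
    rw [← hp x y hx hy]
    beta_reduce
    rw [h x hx, Finset.sum_mul]
  exact GP.sum f.S _ key

open Classical in
def YP.lo (f : YP) : ℝ := if h : f.S.Nonempty then f.S.min' h else 1

lemma YP.lo_le (f : YP) {β : ℝ} (h : β ∈ f.S) : f.lo ≤ β := by
  have hn : f.S.Nonempty := ⟨β, h⟩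
  rw [YP.lo, dif_pos hn]
  exact f.S.min'_le _ h

lemma YP.lo_mem (f : YP) (h : f.S.Nonempty) : f.lo ∈ f.S := by
  rw [YP.lo, dif_pos h]
  exact f.S.min'_mem h

open Classical in
def YP.D (f : YP) : YP where
  S := (f.S.erase f.lo).image (fun b => b - f.lo)
  κ := fun β x => β * f.κ (β + f.lo) x
  hκ := by
    intro β hβ
    obtain ⟨b, hb, rfl⟩ := Finset.mem_image.1 hβ
    rw [sub_add_cancel]
    exact (f.hκ b (Finset.mem_of_mem_erase hb)).smul (sub_ne_zero.2 (Finset.ne_of_mem_erase hb))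

open Classical in
lemma YP.D_ev (f : YP) (x y : ℝ) :
    f.D.ev x y = ∑ b ∈ f.S.erase f.lo, (b - f.lo) * f.κ b x * y ^ (b - f.lo) := by
  simp only [YP.ev, YP.D]
  rw [Finset.sum_image (fun a _ b _ h => sub_left_injective h)]
  simp

lemma YP.D_card (f : YP) : f.D.S.card = f.S.card - 1 := by
  classical
  simp only [YP.D]
  rw [Finset.card_image_of_injective _ sub_left_injective]
  by_cases h : f.S.Nonempty
  · rw [Finset.card_erase_of_mem (f.lo_mem h)]
  · rw [Finset.not_nonempty_iff_eq_empty] at h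
    simp [h]

lemma YP.D_pos (f : YP) {β : ℝ} (h : β ∈ f.D.S) : 0 < β := by
  classical
  obtain ⟨b, hb, rfl⟩ := Finset.mem_image.1 h
  have := lt_of_le_of_ne (f.lo_le (Finset.mem_of_mem_erase hb)) (Finset.ne_of_mem_erase hb).symm
  linarith

lemma YP.D_lo_pos (f : YP) : 0 < f.D.lo := by
  by_cases h : f.D.S.Nonempty
  · exact f.D_pos (f.D.lo_mem h)
  · rw [YP.lo, dif_neg h]; exact one_pos

def YP.G (f : YP) (x y : ℝ) : ℝ := y ^ (-f.lo) * f.ev x y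

lemma YP.G_gp (f : YP) : GP f.G := f.gp.ymul _

lemma YP.G_eq (f : YP) (x : ℝ) {y : ℝ} (hy : 0 < y) :
    f.G x y = ∑ b ∈ f.S, f.κ b x * y ^ (b - f.lo) := by
  rw [YP.G, YP.ev, Finset.mul_sum]
  refine Finset.sum_congr rfl fun b _ => ?_
  rw [Real.rpow_sub hy, Real.rpow_neg hy.le]; field_simp

lemma YP.sign_G (f : YP) (x : ℝ) {y : ℝ} (hy : 0 < y) :
    SignType.sign (f.G x y) = SignType.sign (f.ev x y) := by
  rw [YP.G, sign_mul, sign_pos (Real.rpow_pos_of_pos hy _), one_mul]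

lemma YP.G_deriv' (f : YP) (x : ℝ) {y : ℝ} (hy : 0 < y) : HasDerivAt (f.G x) (y⁻¹ * f.D.ev x y) y := by
  classical
  have h1 : HasDerivAt (fun y => ∑ b ∈ f.S, f.κ b x * y ^ (b - f.lo))
      (∑ b ∈ f.S, f.κ b x * ((b - f.lo) * y ^ (b - f.lo - 1))) y :=
    HasDerivAt.fun_sum fun b _ => (Real.hasDerivAt_rpow_const (Or.inl hy.ne')).const_mul _
  have h2 : ∑ b ∈ f.S, f.κ b x * ((b - f.lo) * y ^ (b - f.lo - 1)) = y⁻¹ * f.D.ev x y := by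
    rw [f.D_ev, Finset.mul_sum, ← Finset.sum_erase (a := f.lo) f.S]
    · refine Finset.sum_congr rfl fun b _ => ?_
      rw [Real.rpow_sub_one hy.ne']; field_simp
    · simp
  rw [← h2]
  refine h1.congr_of_eventuallyEq ?_
  filter_upwards [Ioi_mem_nhds hy] with t ht using f.G_eq x ht

lemma YP.G_deriv (f : YP) (x : ℝ) {y : ℝ} (hy : 0 < y) :
    HasDerivAt (f.G x) (y ^ (f.D.lo - 1) * f.D.G x y) y := by
  have : y ^ (f.D.lo - 1) * f.D.G x y = y⁻¹ * f.D.ev x y := by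
    rw [YP.G, Real.rpow_sub_one hy.ne', Real.rpow_neg hy.le]
    have := Real.rpow_pos_of_pos hy f.D.lo
    field_simp
  rw [this]
  exact f.G_deriv' x hy

lemma YP.ev_empty (f : YP) (h : f.S.card = 0) (x y : ℝ) : f.ev x y = 0 := by
  rw [Finset.card_eq_zero] at h
  simp [YP.ev, h]

open Classical in
def YP.inv (f : YP) : YP where
  S := f.S.image (fun b => -b)
  κ := fun β => f.κ (-β)
  hκ := by
    intro β hβ
    obtain ⟨b, hb, rfl⟩ := Finset.mem_image.1 hβ
    rw [neg_neg]
    exact f.hκ b hb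

lemma YP.inv_ev (f : YP) (x : ℝ) {y : ℝ} (hy : 0 < y) : f.inv.ev x y = f.ev x y⁻¹ := by
  classical
  simp only [YP.ev, YP.inv]
  rw [Finset.sum_image (fun a _ b _ h => neg_injective h)]
  refine Finset.sum_congr rfl fun b _ => ?_
  rw [neg_neg, Real.inv_rpow hy.le, Real.rpow_neg hy.le]

lemma YP.inv_card (f : YP) : f.inv.S.card = f.S.card := by
  classical
  simp only [YP.inv]
  exact Finset.card_image_of_injective _ neg_injective

lemma D_iter_card (f : YP) (n : ℕ) : (YP.D^[n] f).S.card = f.S.card - n := by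
  induction n with
  | zero => simp
  | succ n ih => rw [Function.iterate_succ_apply', YP.D_card, ih]; omega

lemma D_closure (F0 : Set YP) (h : F0.Finite) :
    ∃ F : Set YP, F.Finite ∧ F0 ⊆ F ∧ ∀ f ∈ F, f.S.Nonempty → f.D ∈ F := by
  refine ⟨⋃ f ∈ F0, (fun i => YP.D^[i] f) '' Set.Iic f.S.card, h.biUnion fun f _ => (Set.finite_Iic _).image _, ?_, ?_⟩
  · intro f hf
    exact Set.mem_biUnion hf ⟨0, by simp, rfl⟩
  · intro g hg hne
    simp only [Set.mem_iUnion] at hg ⊢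
    obtain ⟨f, hf, i, hi, rfl⟩ := hg
    refine ⟨f, hf, i + 1, ?_, Function.iterate_succ_apply' _ _ _⟩
    have := Finset.card_pos.2 hne
    rw [D_iter_card] at this
    simp only [Set.mem_Iic]
    omega

end P3d

section P4a
open Filter Topology

def sg {ι : Type} (Fam : ι → YP) (x y : ℝ) : ι → SignType := fun i => SignType.sign ((Fam i).ev x y)

def TT {ι : Type} (Fam : ι → YP) (x : ℝ) : Set (ι → SignType) := {σ | ∃ y, 0 < y ∧ sg Fam x y = σ}

structure Good {ι : Type} (Fam : ι → YP) (x : ℝ) : Prop where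
  pos : 0 < x
  nz : ∀ i, ∀ β ∈ (Fam i).S, (Fam i).κ β x ≠ 0
  star : ∀ i j, (Fam i).S.Nonempty → ∀ y, 0 < y → (Fam i).ev x y = 0 → (Fam j).ev x y = 0 →
    ∀ᶠ p in 𝓝 (x, y), (Fam i).ev p.1 p.2 = 0 → (Fam j).ev p.1 p.2 = 0

lemma sign_ev {X : Type*} {l : Filter X} {f : X → ℝ} {a : ℝ} (hf : Tendsto f l (𝓝 a)) (h : a ≠ 0) :
    ∀ᶠ q in l, SignType.sign (f q) = SignType.sign a := by
  rcases lt_or_gt_of_ne h with h | h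
  · filter_upwards [hf.eventually_lt_const h] with q hq
    rw [sign_neg h, sign_neg hq]
  · filter_upwards [hf.eventually_const_lt h] with q hq
    rw [sign_pos h, sign_pos hq]

lemma sign_const {φ : ℝ → ℝ} {a b : ℝ} (hab : a ≤ b) (hc : ContinuousOn φ (Icc a b)) (h : ∀ t ∈ Icc a b, φ t ≠ 0) :
    SignType.sign (φ a) = SignType.sign (φ b) := by
  rcases lt_or_gt_of_ne (h a (left_mem_Icc.2 hab)) with h1 | h1 <;>
  rcases lt_or_gt_of_ne (h b (right_mem_Icc.2 hab)) with h2 | h2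
  · rw [sign_neg h1, sign_neg h2]
  · obtain ⟨t, ht, h0⟩ := intermediate_value_Icc hab hc ⟨h1.le, h2.le⟩
    exact absurd h0 (h t ht)
  · obtain ⟨t, ht, h0⟩ := intermediate_value_Icc' hab hc ⟨h2.le, h1.le⟩
    exact absurd h0 (h t ht)
  · rw [sign_pos h1, sign_pos h2]

lemma YP.cont_y (f : YP) {x y : ℝ} (hx : 0 < x) (hy : 0 < y) : ContinuousAt (fun t => f.ev x t) y :=
  ContinuousAt.comp (g := fun p : ℝ × ℝ => f.ev p.1 p.2) (f := fun t => (x, t)) (f.cont hx hy) (by fun_prop)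

lemma YP.cont_x (f : YP) {x y : ℝ} (hx : 0 < x) (hy : 0 < y) : ContinuousAt (fun t => f.ev t y) x :=
  ContinuousAt.comp (g := fun p : ℝ × ℝ => f.ev p.1 p.2) (f := fun t => (t, y)) (f.cont hx hy) (by fun_prop)

lemma sg_caseA {ι : Type} [Finite ι] (Fam : ι → YP) {x y : ℝ} (hx : 0 < x) (hy : 0 < y)
    (h : ∀ i, (Fam i).S.Nonempty → (Fam i).ev x y ≠ 0) : ∀ᶠ p in 𝓝 (x, y), sg Fam p.1 p.2 = sg Fam x y := by
  have : ∀ i, ∀ᶠ p in 𝓝 (x, y), SignType.sign ((Fam i).ev p.1 p.2) = SignType.sign ((Fam i).ev x y) := by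
    intro i
    by_cases hi : (Fam i).S.Nonempty
    · exact sign_ev ((Fam i).cont hx hy).tendsto (h i hi)
    · have h0 : (Fam i).S.card = 0 := by simpa [Finset.card_eq_zero, Finset.not_nonempty_iff_eq_empty] using hi
      exact Eventually.of_forall fun p => by rw [YP.ev_empty _ h0, YP.ev_empty _ h0]
  filter_upwards [eventually_all.2 this] with p hp
  funext i
  exact hp i

lemma L1 {ι : Type} [Finite ι] (Fam : ι → YP) (hD : ∀ i, (Fam i).S.Nonempty → ∃ j, Fam j = (Fam i).D)
    {x1 y1 : ℝ} (hg : Good Fam x1) (hy1 : 0 < y1) :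
    (∀ᶠ x in 𝓝 x1, sg Fam x1 y1 ∈ TT Fam x) ∧ ∀ᶠ p in 𝓝 (x1, y1), sg Fam p.1 p.2 ∈ TT Fam x1 := by
  classical
  have hx1 := hg.pos
  by_cases hA : ∀ i, (Fam i).S.Nonempty → (Fam i).ev x1 y1 ≠ 0
  · have := sg_caseA Fam hx1 hy1 hA
    refine ⟨?_, ?_⟩
    · have hc : ContinuousAt (fun x : ℝ => (x, y1)) x1 := by fun_prop
      filter_upwards [hc.eventually this] with x hx
      exact ⟨y1, hy1, hx⟩
    · filter_upwards [this] with p hp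
      exact ⟨y1, hy1, hp.symm⟩
  push Not at hA
  obtain ⟨i, ⟨hi, hi0⟩, hmin⟩ := exists_minimalFor_of_wellFoundedLT
    (fun i => (Fam i).S.Nonempty ∧ (Fam i).ev x1 y1 = 0) (fun i => (Fam i).S.card) hA
  obtain ⟨j, hj⟩ := hD i hi
  have hcard : (Fam j).S.card = (Fam i).S.card - 1 := by rw [hj, YP.D_card]
  have hipos := Finset.card_pos.2 hi
  have hj0 : (Fam j).ev x1 y1 ≠ 0 := by
    intro h0
    by_cases hn : (Fam j).S.Nonempty
    · have := hmin (j := j) ⟨hn, h0⟩ (by simp only [hcard]; omega)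
      simp only [hcard] at this
      omega
    · have hc0 : (Fam j).S.card = 0 := by simpa [Finset.card_eq_zero, Finset.not_nonempty_iff_eq_empty] using hn
      have : (Fam i).S.card = 1 := by omega
      obtain ⟨b, hb⟩ := Finset.card_eq_one.1 this
      rw [YP.ev, hb, Finset.sum_singleton] at hi0
      exact (mul_ne_zero (hg.nz i b (by simp [hb])) (Real.rpow_pos_of_pos hy1 _).ne') hi0
  set s := (Fam j).ev x1 y1 with hs
  have E1 : ∀ᶠ p : ℝ × ℝ in 𝓝 (x1, y1), 0 < p.1 := continuousAt_fst.eventually_const_lt hx1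
  have E2 : ∀ᶠ p : ℝ × ℝ in 𝓝 (x1, y1), 0 < p.2 := continuousAt_snd.eventually_const_lt hy1
  have E3 : ∀ᶠ p : ℝ × ℝ in 𝓝 (x1, y1), 0 < s * (Fam j).ev p.1 p.2 :=
    (continuousAt_const.mul ((Fam j).cont hx1 hy1)).eventually_const_lt (by
      simp only [← hs]; exact mul_self_pos.2 hj0)
  have E4 : ∀ k, ∀ᶠ p : ℝ × ℝ in 𝓝 (x1, y1),
      ((Fam i).ev p.1 p.2 = 0 → SignType.sign ((Fam k).ev p.1 p.2) = SignType.sign ((Fam k).ev x1 y1)) ∧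
      ((Fam i).ev p.1 p.2 ≠ 0 → (Fam k).S.Nonempty → (Fam k).ev p.1 p.2 ≠ 0) := by
    intro k
    by_cases hk : (Fam k).S.Nonempty
    · by_cases hk0 : (Fam k).ev x1 y1 = 0
      · filter_upwards [hg.star i k hi y1 hy1 hi0 hk0, hg.star k i hk y1 hy1 hk0 hi0] with p h1 h2
        exact ⟨fun h => by rw [h1 h, hk0], fun h _ h' => h (h2 h')⟩
      · filter_upwards [sign_ev ((Fam k).cont hx1 hy1).tendsto hk0] with p hp
        exact ⟨fun _ => hp, fun _ _ h0 => by rw [h0, sign_zero, eq_comm, sign_eq_zero_iff] at hp; exact hk0 hp⟩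
    · have h0 : (Fam k).S.card = 0 := by simpa [Finset.card_eq_zero, Finset.not_nonempty_iff_eq_empty] using hk
      exact Eventually.of_forall fun p => ⟨fun _ => by rw [YP.ev_empty _ h0, YP.ev_empty _ h0], fun _ h => absurd h hk⟩
  obtain ⟨r, hr, hbox⟩ := Metric.eventually_nhds_iff.1 ((E1.and (E2.and (E3.and (eventually_all.2 E4)))))
  replace hbox : ∀ x y, |x - x1| < r → |y - y1| < r → _ := fun x y hx hy =>
    hbox (y := (x, y)) (by rw [Prod.dist_eq, max_lt_iff, Real.dist_eq, Real.dist_eq]; exact ⟨hx, hy⟩)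
  simp only at hbox
  have hy1r : ∀ y ∈ Ioo (y1 - r) (y1 + r), |y - y1| < r := fun y hy => by rw [abs_lt]; constructor <;> linarith [hy.1, hy.2]
  have hx1r : |x1 - x1| < r := by simpa using hr
  have hmono : ∀ x, |x - x1| < r → StrictMonoOn (fun y => s * (Fam i).G x y) (Ioo (y1 - r) (y1 + r)) := by
    intro x hx
    have hd : ∀ y ∈ Ioo (y1 - r) (y1 + r), HasDerivAt (fun y => s * (Fam i).G x y) (s * (y⁻¹ * (Fam j).ev x y)) y := by
      intro y hy
      have := (hbox x y hx (hy1r y hy)).2.1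
      rw [hj]
      exact ((Fam i).G_deriv' x this).const_mul s
    refine strictMonoOn_of_deriv_pos (convex_Ioo _ _) (fun y hy => (hd y hy).continuousAt.continuousWithinAt) ?_
    intro y hy
    rw [interior_Ioo] at hy
    rw [(hd y hy).deriv]
    have h1 := (hbox x y hx (hy1r y hy))
    have : s * (y⁻¹ * (Fam j).ev x y) = y⁻¹ * (s * (Fam j).ev x y) := by ring
    rw [this]
    exact mul_pos (inv_pos.2 h1.2.1) h1.2.2.1
  have hG0 : ∀ x y, 0 < y → ((Fam i).G x y = 0 ↔ (Fam i).ev x y = 0) := by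
    intro x y hy
    rw [YP.G, mul_eq_zero, or_iff_right (Real.rpow_pos_of_pos hy _).ne']
  have hGc : ∀ y, 0 < y → ContinuousAt (fun x => s * (Fam i).G x y) x1 := fun y hy =>
    continuousAt_const.mul (continuousAt_const.mul ((Fam i).cont_x hx1 hy))
  -- a box height
  set δ := r / 2 with hδ
  have hδ0 : 0 < δ := by positivity
  have mem1 : y1 ∈ Ioo (y1 - r) (y1 + r) := ⟨by linarith, by linarith⟩
  have memp : y1 + δ ∈ Ioo (y1 - r) (y1 + r) := ⟨by linarith, by linarith⟩
  have memm : y1 - δ ∈ Ioo (y1 - r) (y1 + r) := ⟨by linarith, by linarith⟩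
  have hp0 := (hbox x1 _ hx1r (hy1r _ memp)).2.1
  have hm0 := (hbox x1 _ hx1r (hy1r _ memm)).2.1
  have hGz : s * (Fam i).G x1 y1 = 0 := by rw [(hG0 x1 y1 hy1).2 hi0, mul_zero]
  have hGp : 0 < s * (Fam i).G x1 (y1 + δ) := by
    have := hmono x1 hx1r mem1 memp (by linarith); simp only at this; linarith
  have hGm : s * (Fam i).G x1 (y1 - δ) < 0 := by
    have := hmono x1 hx1r memm mem1 (by linarith); simp only at this; linarith
  have hnear : ∀ᶠ x in 𝓝 x1, |x - x1| < r := by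
    have : ContinuousAt (fun x => |x - x1|) x1 := by fun_prop
    exact this.eventually_lt_const hx1r
  have hsum : ∀ᶠ x in 𝓝 x1, |x - x1| < r ∧ 0 < s * (Fam i).G x (y1 + δ) ∧ s * (Fam i).G x (y1 - δ) < 0 :=
    hnear.and (((hGc _ hp0).eventually_const_lt hGp).and ((hGc _ hm0).eventually_lt_const hGm))
  constructor
  · filter_upwards [hsum] with x ⟨h1, h2, h3⟩
    have hsub : Icc (y1 - δ) (y1 + δ) ⊆ Ioo (y1 - r) (y1 + r) := fun y hy => ⟨by linarith [hy.1], by linarith [hy.2]⟩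
    have hcont : ContinuousOn (fun y => s * (Fam i).G x y) (Icc (y1 - δ) (y1 + δ)) := by
      intro y hy
      have := (hbox x y h1 (hy1r y (hsub hy))).2.1
      exact (((Fam i).G_deriv' x this).continuousAt.continuousWithinAt).const_mul s
    obtain ⟨y, hy, hyz⟩ := intermediate_value_Icc (by linarith) hcont ⟨h3.le, h2.le⟩
    have hb := hbox x y h1 (hy1r y (hsub hy))
    have hz := (hG0 x y hb.2.1).1 ((mul_eq_zero.1 hyz).resolve_left hj0)
    refine ⟨y, hb.2.1, ?_⟩
    funext k
    exact (hb.2.2.2 k).1 hz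
  · have hcx : ∀ {P : ℝ → Prop}, (∀ᶠ x in 𝓝 x1, P x) → ∀ᶠ p : ℝ × ℝ in 𝓝 (x1, y1), P p.1 := fun h =>
      continuousAt_fst.eventually h
    have hnz : ∀ y ∈ Ioo (y1 - r) (y1 + r), s * (Fam i).G x1 y ≠ 0 → ∀ k, (Fam k).S.Nonempty → (Fam k).ev x1 y ≠ 0 := by
      intro y hy h k hk
      have hb := hbox x1 y hx1r (hy1r y hy)
      exact (hb.2.2.2 k).2 (fun h0 => h (by rw [(hG0 x1 y hb.2.1).2 h0, mul_zero])) hk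
    have hAp : ∀ᶠ x in 𝓝 x1, sg Fam x (y1 + δ) = sg Fam x1 (y1 + δ) := by
      have hc : ContinuousAt (fun x : ℝ => (x, y1 + δ)) x1 := by fun_prop
      exact hc.eventually (sg_caseA Fam hx1 hp0 (hnz _ memp hGp.ne'))
    have hAm : ∀ᶠ x in 𝓝 x1, sg Fam x (y1 - δ) = sg Fam x1 (y1 - δ) := by
      have hc : ContinuousAt (fun x : ℝ => (x, y1 - δ)) x1 := by fun_prop
      exact hc.eventually (sg_caseA Fam hx1 hm0 (hnz _ memm hGm.ne))
    have hyb : ∀ᶠ p : ℝ × ℝ in 𝓝 (x1, y1), p.2 ∈ Icc (y1 - δ) (y1 + δ) :=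
      continuousAt_snd.eventually (Icc_mem_nhds (by linarith) (by linarith))
    have hvert : ∀ x a b, |x - x1| < r → a ≤ b → y1 - δ ≤ a → b ≤ y1 + δ →
        (∀ t ∈ Icc a b, s * (Fam i).G x t ≠ 0) → sg Fam x a = sg Fam x b := by
      intro x a b hx hab ha hb hn
      have hsub : Icc a b ⊆ Ioo (y1 - r) (y1 + r) := fun y hy => ⟨by linarith [hy.1], by linarith [hy.2]⟩
      funext k
      by_cases hk : (Fam k).S.Nonempty
      · refine sign_const (φ := fun t => (Fam k).ev x t) hab (fun t ht => ?_) (fun t ht => ?_)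
        · have hbt := hbox x t hx (hy1r t (hsub ht))
          exact ((Fam k).cont_y hbt.1 hbt.2.1).continuousWithinAt
        · have hbt := hbox x t hx (hy1r t (hsub ht))
          exact (hbt.2.2.2 k).2 (fun h0 => hn t ht (by rw [(hG0 x t hbt.2.1).2 h0, mul_zero])) hk
      · have h0 : (Fam k).S.card = 0 := by simpa [Finset.card_eq_zero, Finset.not_nonempty_iff_eq_empty] using hk
        simp only [sg, YP.ev_empty _ h0]
    filter_upwards [hcx hnear, hcx hAp, hcx hAm, hyb] with p h1 h2 h3 h4
    have hpm : p.2 ∈ Ioo (y1 - r) (y1 + r) := ⟨by linarith [h4.1], by linarith [h4.2]⟩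
    have hb := hbox p.1 p.2 h1 (hy1r _ hpm)
    rcases lt_trichotomy (s * (Fam i).G p.1 p.2) 0 with hlt | heq | hgt
    · refine ⟨y1 - δ, hm0, ?_⟩
      rw [← h3]
      refine hvert p.1 _ _ h1 h4.1 le_rfl h4.2 fun t ht => ?_
      have hmt : t ∈ Ioo (y1 - r) (y1 + r) := ⟨by linarith [ht.1], by linarith [ht.2, h4.2]⟩
      exact (((hmono p.1 h1).monotoneOn hmt hpm ht.2).trans_lt hlt).ne
    · have hz := (hG0 p.1 p.2 hb.2.1).1 ((mul_eq_zero.1 heq).resolve_left hj0)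
      refine ⟨y1, hy1, ?_⟩
      funext k
      exact ((hb.2.2.2 k).1 hz).symm
    · refine ⟨y1 + δ, hp0, ?_⟩
      rw [← h2]
      refine (hvert p.1 _ _ h1 h4.2 h4.1 le_rfl fun t ht => ?_).symm
      have hmt : t ∈ Ioo (y1 - r) (y1 + r) := ⟨by linarith [ht.1, h4.1], by linarith [ht.2]⟩
      exact (hgt.trans_le ((hmono p.1 h1).monotoneOn hpm hmt ht.1)).ne'

end P4a

section P4b
open Filter Topology

lemma L0 {ι : Type} [Finite ι] (Fam : ι → YP) {x1 : ℝ} (hx1 : 0 < x1)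
    (hnz : ∀ i, ∀ β ∈ (Fam i).S, (Fam i).κ β x1 ≠ 0) :
    ∃ s, ∀ᶠ p in 𝓝 x1 ×ˢ 𝓝[>] (0:ℝ), sg Fam p.1 p.2 = s := by
  classical
  have hpos : ∀ᶠ p in 𝓝 x1 ×ˢ 𝓝[>] (0:ℝ), 0 < p.2 :=
    tendsto_snd.eventually self_mem_nhdsWithin
  have key : ∀ i, ∃ s, ∀ᶠ p in 𝓝 x1 ×ˢ 𝓝[>] (0:ℝ), SignType.sign ((Fam i).ev p.1 p.2) = s := by
    intro i
    by_cases hi : (Fam i).S.Nonempty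
    · set f := Fam i
      have ht : Tendsto (fun p : ℝ × ℝ => ∑ b ∈ f.S, f.κ b p.1 * p.2 ^ (b - f.lo)) (𝓝 x1 ×ˢ 𝓝[>] (0:ℝ))
          (𝓝 (∑ b ∈ f.S, f.κ b x1 * (0:ℝ) ^ (b - f.lo))) := by
        refine tendsto_finsetSum _ fun b hb => ?_
        refine Tendsto.mul ?_ ?_
        · exact ((f.hκ b hb).analytic hx1).continuousAt.tendsto.comp tendsto_fst
        · have : ContinuousAt (fun t : ℝ => t ^ (b - f.lo)) 0 :=
            Real.continuousAt_rpow_const _ _ (Or.inr (sub_nonneg.2 (f.lo_le hb)))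
          exact (this.tendsto.mono_left nhdsWithin_le_nhds).comp tendsto_snd
      have hsum : ∑ b ∈ f.S, f.κ b x1 * (0:ℝ) ^ (b - f.lo) = f.κ f.lo x1 := by
        rw [Finset.sum_eq_single f.lo]
        · simp
        · intro b hb hne
          rw [Real.zero_rpow (sub_ne_zero.2 hne), mul_zero]
        · exact fun h => absurd (f.lo_mem hi) h
      rw [hsum] at ht
      refine ⟨SignType.sign (f.κ f.lo x1), ?_⟩
      filter_upwards [hpos, sign_ev ht (hnz i _ (f.lo_mem hi))] with p h1 h2
      rw [← f.G_eq _ h1, f.sign_G _ h1] at h2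
      exact h2
    · have h0 : (Fam i).S.card = 0 := by simpa [Finset.card_eq_zero, Finset.not_nonempty_iff_eq_empty] using hi
      exact ⟨0, Eventually.of_forall fun p => by rw [YP.ev_empty _ h0, sign_zero]⟩
  choose s hs using key
  refine ⟨s, ?_⟩
  filter_upwards [eventually_all.2 hs] with p hp
  funext i
  exact hp i

lemma Linf {ι : Type} [Finite ι] (Fam : ι → YP) {x1 : ℝ} (hx1 : 0 < x1)
    (hnz : ∀ i, ∀ β ∈ (Fam i).S, (Fam i).κ β x1 ≠ 0) :
    ∃ s, ∀ᶠ p in 𝓝 x1 ×ˢ (atTop : Filter ℝ), sg Fam p.1 p.2 = s := by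
  classical
  obtain ⟨s, hs⟩ := L0 (fun i => (Fam i).inv) hx1 (by
    intro i β hβ
    obtain ⟨b, hb, rfl⟩ := Finset.mem_image.1 hβ
    simp only [YP.inv, neg_neg]
    exact hnz i b hb)
  refine ⟨s, ?_⟩
  have ht : Tendsto (fun p : ℝ × ℝ => (p.1, p.2⁻¹)) (𝓝 x1 ×ˢ (atTop : Filter ℝ)) (𝓝 x1 ×ˢ 𝓝[>] (0:ℝ)) :=
    tendsto_fst.prodMk (tendsto_inv_atTop_nhdsGT_zero.comp tendsto_snd)
  have hpos : ∀ᶠ p in 𝓝 x1 ×ˢ (atTop : Filter ℝ), 0 < p.2 := tendsto_snd.eventually (eventually_gt_atTop 0)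
  filter_upwards [ht.eventually hs, hpos] with p h1 h2
  rw [← h1]
  funext i
  simp only [sg]
  rw [YP.inv_ev _ _ (inv_pos.2 h2), inv_inv]

lemma T_loc {ι : Type} [Finite ι] (Fam : ι → YP) (hD : ∀ i, (Fam i).S.Nonempty → ∃ j, Fam j = (Fam i).D)
    {x1 : ℝ} (hg : Good Fam x1) : ∀ᶠ x in 𝓝 x1, TT Fam x = TT Fam x1 := by
  obtain ⟨s0, hs0⟩ := L0 Fam hg.pos hg.nz
  obtain ⟨s1, hs1⟩ := Linf Fam hg.pos hg.nz
  obtain ⟨pa, hpa, pb, hpb, h0⟩ := eventually_prod_iff.1 hs0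
  obtain ⟨qa, hqa, qb, hqb, h1⟩ := eventually_prod_iff.1 hs1
  obtain ⟨ε, hε, hεp⟩ := mem_nhdsGT_iff_exists_Ioo_subset.1 hpb
  obtain ⟨M, hM⟩ := eventually_atTop.1 hqb
  have hε : 0 < ε := hε
  have hs0T : s0 ∈ TT Fam x1 := ⟨ε / 2, by linarith, h0 hpa.self_of_nhds (hεp ⟨by linarith, by linarith⟩)⟩
  have hs1T : s1 ∈ TT Fam x1 :=
    ⟨max M 1, by positivity, h1 hqa.self_of_nhds (hM _ (le_max_left _ _))⟩
  have hK : ∀ᶠ x in 𝓝 x1, ∀ y ∈ Icc ε M, sg Fam x y ∈ TT Fam x1 :=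
    isCompact_Icc.eventually_forall_of_forall_eventually fun y hy => (L1 Fam hD hg (hε.trans_le hy.1)).2
  have hfin : (TT Fam x1).Finite := Set.toFinite _
  have hback : ∀ᶠ x in 𝓝 x1, ∀ σ ∈ TT Fam x1, σ ∈ TT Fam x := by
    rw [eventually_all_finite hfin]
    rintro σ ⟨y, hy, rfl⟩
    exact (L1 Fam hD hg hy).1
  filter_upwards [hpa, hqa, hK, hback] with x e1 e2 e3 e4
  refine Set.Subset.antisymm ?_ e4
  rintro σ ⟨y, hy, rfl⟩
  rcases lt_or_ge y ε with h | h
  · have : sg Fam x y = s0 := h0 e1 (hεp ⟨hy, h⟩)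
    rwa [this]
  rcases le_or_gt y M with h' | h'
  · exact e3 y ⟨h, h'⟩
  · have : sg Fam x y = s1 := h1 e2 (hM y h'.le)
    rwa [this]

lemma T_const {ι : Type} [Finite ι] (Fam : ι → YP) (hD : ∀ i, (Fam i).S.Nonempty → ∃ j, Fam j = (Fam i).D)
    {I : Set ℝ} (hI : IsPreconnected I) (hg : ∀ x ∈ I, Good Fam x) {x x' : ℝ} (hx : x ∈ I) (hx' : x' ∈ I) :
    TT Fam x = TT Fam x' := by
  let _ : TopologicalSpace (Set (ι → SignType)) := ⊥
  have : DiscreteTopology (Set (ι → SignType)) := ⟨rfl⟩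
  refine hI.constant (f := TT Fam) (fun x hx => ?_) hx hx'
  refine ContinuousAt.continuousWithinAt ?_
  rw [ContinuousAt, nhds_discrete (Set (ι → SignType)), tendsto_pure]
  exact T_loc Fam hD (hg x hx)

lemma good_coord {ι : Type} [Finite ι] (Fam : ι → YP) {Ξ : ℝ → ℝ} (hΞ : IsCoord Ξ) :
    ∃ ε > 0, ∀ x, 0 < x → 0 < Ξ x → Ξ x < ε → Good Fam x := by
  classical
  have h1 : ∀ i : ι, ∀ β : (Fam i).S, ∃ ε > 0, ∀ x, 0 < x → 0 < Ξ x → Ξ x < ε → (Fam i).κ β x ≠ 0 := by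
    intro i β
    obtain ⟨ν, c, hc, w, θ, hθ, hw, ε, hε, hv⟩ := hΞ.2 _ ((Fam i).hκ β β.2)
    have hL : Lead (fun ξ => ξ ^ ν * (c + w ξ)) := ⟨ν, c, hc, w, θ, hθ, hw, ε, hε, fun _ _ _ => rfl⟩
    obtain ⟨ε', hε', hsub⟩ := mem_nhdsGT_iff_exists_Ioo_subset.1 hL.ne
    have hε' : 0 < ε' := hε'
    refine ⟨min ε ε', lt_min hε hε', fun x hx h1 h2 => ?_⟩
    rw [hv x hx h1 (h2.le.trans (min_le_left _ _))]
    exact hsub ⟨h1, h2.trans_le (min_le_right _ _)⟩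
  have h2 : ∀ i j : ι, ∃ ε > 0, ∀ x, 0 < x → 0 < Ξ x → Ξ x < ε → (Fam i).S.Nonempty → ∀ y, 0 < y →
      (Fam i).ev x y = 0 → (Fam j).ev x y = 0 → ∀ᶠ p in 𝓝 (x, y), (Fam i).ev p.1 p.2 = 0 → (Fam j).ev p.1 p.2 = 0 := by
    intro i j
    by_cases hi : (Fam i).S.Nonempty
    · obtain ⟨ε, hε, h⟩ := STAR hΞ (Fam i) (Fam j) hi
      exact ⟨ε, hε, fun x a b c _ => h x a b c⟩
    · exact ⟨1, one_pos, fun _ _ _ _ h => absurd h hi⟩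
  choose e1 he1 H1 using h1
  choose e2 he2 H2 using h2
  obtain ⟨ε1, hε1, hle1⟩ := exists_pos_lb (fun k : Σ i, (Fam i).S => e1 k.1 k.2) fun k => he1 _ _
  obtain ⟨ε2, hε2, hle2⟩ := exists_pos_lb (fun k : ι × ι => e2 k.1 k.2) fun k => he2 _ _
  refine ⟨min ε1 ε2, lt_min hε1 hε2, fun x hx h1 h2 => ⟨hx, ?_, ?_⟩⟩
  · intro i β hβ
    exact H1 i ⟨β, hβ⟩ x hx h1 ((h2.trans_le (min_le_left _ _)).trans_le (hle1 ⟨i, ⟨β, hβ⟩⟩))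
  · intro i j hi
    exact H2 i j x hx h1 ((h2.trans_le (min_le_right _ _)).trans_le (hle2 (i, j))) hi

end P4b

section P5a
open Filter Topology

def cs (f : YP) (x y : ℝ) : ℕ → SignType := fun l => SignType.sign ((YP.D^[l] f).ev x y)

def bb (f : YP) (l : ℕ) : ℝ := (YP.D^[l + 1] f).lo

lemma bb_pos (f : YP) (l : ℕ) : 0 < bb f l := by
  rw [bb, Function.iterate_succ_apply']
  exact YP.D_lo_pos _

def Elow (f : YP) (τ τ' : ℕ → SignType) (x y : ℝ) : ℕ → ℕ → ℝ
  | 0, _ => 0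
  | n + 1, l => (if τ l = τ' l then 0 else (τ' l : ℝ) * (YP.D^[l] f).G x y)
      + 2 * (y ^ bb f l / bb f l) * Elow f τ τ' x y n (l + 1)

lemma Elow_gp (f : YP) (τ τ' : ℕ → SignType) (n l : ℕ) : GP (fun x y => Elow f τ τ' x y n l) := by
  induction n generalizing l with
  | zero => simpa [Elow] using GP.zero
  | succ n ih =>
    simp only [Elow]
    refine GP.add ?_ ?_
    · by_cases h : τ l = τ' l
      · simpa [h] using GP.zero
      · simp only [h, if_false]
        exact (YP.G_gp _).smul _
    · have h1 := ((ih (l + 1)).ymul (bb f l)).smul (2 / bb f l)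
      have : (fun x y => 2 / bb f l * (y ^ bb f l * Elow f τ τ' x y n (l + 1))) =
        fun x y => 2 * (y ^ bb f l / bb f l) * Elow f τ τ' x y n (l + 1) := by
        funext x y; ring
      rwa [this] at h1

lemma sign_aux {s s' : SignType} {g : ℝ} (h : s ≠ s') (hg : SignType.sign g = s) : (s' : ℝ) * g ≤ 0 := by
  subst hg
  rcases lt_trichotomy g 0 with h0 | h0 | h0
  · rw [sign_neg h0] at h
    cases s' <;> simp_all <;> linarith
  · simp [h0]
  · rw [sign_pos h0] at h
    cases s' <;> simp_all <;> linarith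

lemma sign_aux2 {g : ℝ} : ((SignType.sign g : SignType) : ℝ) * g = |g| := sign_mul_self g

lemma Elow_nonpos (f : YP) (τ' : ℕ → SignType) (x : ℝ) {y : ℝ} (hy : 0 < y) (n l : ℕ) :
    Elow f (cs f x y) τ' x y n l ≤ 0 := by
  induction n generalizing l with
  | zero => simp [Elow]
  | succ n ih =>
    rw [Elow]
    have h1 := bb_pos f l
    have h2 := ih (l + 1)
    have h3 : 2 * (y ^ bb f l / bb f l) * Elow f (cs f x y) τ' x y n (l + 1) ≤ 0 :=
      mul_nonpos_of_nonneg_of_nonpos (by positivity) h2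
    split_ifs with h
    · linarith
    · have := sign_aux h (YP.sign_G _ x hy)
      linarith

lemma Elow_nonneg (f : YP) (τ : ℕ → SignType) (x : ℝ) {y : ℝ} (hy : 0 < y) (n l : ℕ) :
    0 ≤ Elow f τ (cs f x y) x y n l := by
  induction n generalizing l with
  | zero => simp [Elow]
  | succ n ih =>
    rw [Elow]
    have h1 := bb_pos f l
    have h2 := ih (l + 1)
    have h3 : 0 ≤ 2 * (y ^ bb f l / bb f l) * Elow f τ (cs f x y) x y n (l + 1) :=
      mul_nonneg (by positivity) h2
    split_ifs with h
    · linarith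
    · rw [cs, ← YP.sign_G _ x hy, sign_aux2]
      positivity

lemma Elow_eq (f : YP) (x : ℝ) {z y : ℝ} (hz : 0 < z) (hy : 0 < y) (n l : ℕ) :
    Elow f (cs f x z) (cs f x y) x y n l = Bd (fun l t => (YP.D^[l] f).G x t) (bb f) z y n l := by
  induction n generalizing l with
  | zero => simp [Elow, Bd]
  | succ n ih =>
    rw [Elow, Bd, ih (l + 1)]
    congr 1
    simp only [cs, ← YP.sign_G _ x hy, ← YP.sign_G _ x hz, sign_aux2]

def EE (f : YP) (τ τ' : ℕ → SignType) (x y : ℝ) : ℝ := y ^ f.lo * Elow f τ τ' x y f.S.card 0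

lemma EE_gp (f : YP) (τ τ' : ℕ → SignType) : GP (EE f τ τ') := (Elow_gp f τ τ' _ _).ymul _

lemma EE_nonpos (f : YP) (τ' : ℕ → SignType) (x : ℝ) {y : ℝ} (hy : 0 < y) : EE f (cs f x y) τ' x y ≤ 0 :=
  mul_nonpos_of_nonneg_of_nonpos (Real.rpow_nonneg hy.le _) (Elow_nonpos f τ' x hy _ _)

lemma EE_nonneg (f : YP) (τ : ℕ → SignType) (x : ℝ) {y : ℝ} (hy : 0 < y) : 0 ≤ EE f τ (cs f x y) x y :=
  mul_nonneg (Real.rpow_nonneg hy.le _) (Elow_nonneg f τ x hy _ _)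

lemma EE_bound (f : YP) (x : ℝ) {z y : ℝ} (hz : 0 < z) (hzy : z ≤ y) (h : ∃ t, z ≤ t ∧ t ≤ y ∧ f.ev x t = 0) :
    |f.ev x y| ≤ EE f (cs f x z) (cs f x y) x y := by
  have hy := hz.trans_le hzy
  have h1 := qr_Q (bb f) (bb_pos f) hz hzy f.S.card (fun l t => (YP.D^[l] f).G x t) 0
    (fun l t ht => by
      have := (YP.D^[l] f).G_deriv x ht
      rw [← Function.iterate_succ_apply' YP.D] at this
      exact this)
    (fun k hk t ht => by
      have : (YP.D^[k] f).S.card = 0 := by rw [D_iter_card]; omega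
      simp only [YP.G]
      rw [YP.ev_empty _ this, mul_zero])
    (by
      obtain ⟨t, a, b, c⟩ := h
      refine ⟨t, a, b, ?_⟩
      simp only [Function.iterate_zero, id, YP.G, c, mul_zero])
  rw [EE, Elow_eq f x hz hy]
  have h2 : |f.ev x y| = y ^ f.lo * |f.G x y| := by
    rw [YP.G, abs_mul, abs_of_pos (Real.rpow_pos_of_pos hy _), ← mul_assoc, ← Real.rpow_add hy]
    simp
  rw [h2]
  exact mul_le_mul_of_nonneg_left h1 (Real.rpow_nonneg hy.le _)

abbrev CB := (ℕ → SignType) × (ℕ → SignType)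

def cb (f : YP) (x y : ℝ) : CB := (cs f x y, cs f.inv x y⁻¹)

def EB (f : YP) (τ τ' : CB) (x y : ℝ) : ℝ := EE f τ.1 τ'.1 x y + EE f.inv τ.2 τ'.2 x y⁻¹

lemma EB_gp (f : YP) (τ τ' : CB) : GP (EB f τ τ') := (EE_gp _ _ _).add (EE_gp _ _ _).yinv

lemma EB_nonpos (f : YP) (τ' : CB) (x : ℝ) {y : ℝ} (hy : 0 < y) : EB f (cb f x y) τ' x y ≤ 0 :=
  add_nonpos (EE_nonpos f _ x hy) (EE_nonpos f.inv _ x (inv_pos.2 hy))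

lemma EB_nonneg (f : YP) (τ : CB) (x : ℝ) {y : ℝ} (hy : 0 < y) : 0 ≤ EB f τ (cb f x y) x y :=
  add_nonneg (EE_nonneg f _ x hy) (EE_nonneg f.inv _ x (inv_pos.2 hy))

lemma EB_bound (f : YP) (x : ℝ) {z y : ℝ} (hz : 0 < z) (hy : 0 < y) (h : ∃ t ∈ uIcc z y, f.ev x t = 0) :
    |f.ev x y| ≤ EB f (cb f x z) (cb f x y) x y := by
  obtain ⟨t, ht, h0⟩ := h
  have e1 := EE_nonneg f (cs f x z) x hy
  have e2 := EE_nonneg f.inv (cs f.inv x z⁻¹) x (inv_pos.2 hy)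
  simp only [EB, cb]
  rcases le_total z y with hle | hle
  · rw [uIcc_of_le hle] at ht
    have := EE_bound f x hz hle ⟨t, ht.1, ht.2, h0⟩
    linarith
  · rw [uIcc_of_ge hle] at ht
    have ht0 : 0 < t := hy.trans_le ht.1
    have := EE_bound f.inv x (inv_pos.2 hz) (inv_anti₀ hy hle)
      ⟨t⁻¹, inv_anti₀ ht0 ht.2, inv_anti₀ hy ht.1, by rw [YP.inv_ev _ _ (inv_pos.2 ht0), inv_inv, h0]⟩
    rw [YP.inv_ev _ _ (inv_pos.2 hy), inv_inv] at this
    linarith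

end P5a

section P5b
open Filter Topology

lemma walk_bound {V : Type} (G : SimpleGraph V) (φ : V → ℝ) (S : ℝ) (h : ∀ a b, G.Adj a b → φ a - φ b ≤ S)
    {u v : V} (p : G.Walk u v) : φ u - φ v ≤ p.length * S := by
  induction p with
  | nil => simp
  | cons hadj p ih =>
    have := h _ _ hadj
    rw [SimpleGraph.Walk.length_cons]
    push_cast
    linarith

/-- chain argument along a vertical segment -/
lemma seg_bound {l : ℕ} (g : Fin l → ℝ → ℝ) (H : ℝ → ℝ) {z y S : ℝ} (hH : ContinuousOn H (uIcc z y))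
    (hg : ∀ a, ContinuousOn (g a) (uIcc z y)) (hcov : ∀ t ∈ uIcc z y, ∃ a, H t = g a t) (hS : 0 ≤ S)
    (hb : ∀ a b, (∃ t ∈ uIcc z y, g a t = g b t) → |g a y - g b y| ≤ S) {i j : Fin l} (hi : H z = g i z)
    (hj : H y = g j y) : g i y - g j y ≤ l * S := by
  classical
  let G : SimpleGraph (Fin l) := SimpleGraph.fromRel (fun a b => ∃ t ∈ uIcc z y, g a t = g b t)
  have hadj : ∀ a b, G.Adj a b → g a y - g b y ≤ S := by
    intro a b hab
    rw [SimpleGraph.fromRel_adj] at hab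
    rcases hab.2 with h | ⟨t, ht, h⟩
    · exact (le_abs_self _).trans (hb a b h)
    · exact (le_abs_self _).trans (hb a b ⟨t, ht, h.symm⟩)
  have hreach : G.Reachable i j := by
    by_contra hno
    have hcl : ∀ a, IsClosed {t : uIcc z y | H t = g a t} := fun a =>
      isClosed_eq (continuousOn_iff_continuous_domRestrict.1 hH) (continuousOn_iff_continuous_domRestrict.1 (hg a))
    have hcl2 : ∀ C : Set (Fin l), IsClosed {t : uIcc z y | ∃ a ∈ C, H t = g a t} := by
      intro C
      have : {t : uIcc z y | ∃ a ∈ C, H t = g a t} = ⋃ a ∈ C, {t : uIcc z y | H t = g a t} := by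
        ext t; simp
      rw [this]
      exact (Set.toFinite C).isClosed_biUnion fun a _ => hcl a
    have hpre : IsPreconnected (Set.univ : Set (uIcc z y)) := by
      have : PreconnectedSpace (uIcc z y) := Subtype.preconnectedSpace isPreconnected_uIcc
      exact isPreconnected_univ
    let C : Set (Fin l) := {a | G.Reachable i a}
    obtain ⟨t, _, ⟨a, ha, hta⟩, ⟨b, hb', htb⟩⟩ := isPreconnected_closed_iff.1 hpre _ _ (hcl2 C) (hcl2 Cᶜ)
      (by
        intro t _
        obtain ⟨a, ha⟩ := hcov t t.2
        by_cases h : a ∈ C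
        · exact Or.inl ⟨a, h, ha⟩
        · exact Or.inr ⟨a, h, ha⟩)
      ⟨⟨z, left_mem_uIcc⟩, trivial, i, SimpleGraph.Reachable.refl _, hi⟩
      ⟨⟨y, right_mem_uIcc⟩, trivial, j, hno, hj⟩
    have hab : a ≠ b := by
      rintro rfl
      exact hb' ha
    apply hb'
    have h1 : G.Reachable a b := SimpleGraph.Adj.reachable (by
      rw [SimpleGraph.fromRel_adj]
      exact ⟨hab, Or.inl ⟨t, t.2, by rw [← hta, ← htb]⟩⟩)
    exact SimpleGraph.Reachable.trans ha h1
  obtain ⟨p, hp⟩ := hreach.exists_isPath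
  have hlen := hp.length_lt
  rw [Fintype.card_fin] at hlen
  refine (walk_bound G (fun a => g a y) S hadj p).trans ?_
  exact mul_le_mul_of_nonneg_right (by exact_mod_cast hlen.le) hS

lemma supInf_of {K : Type} [Fintype K] [Nonempty K] (e : K → K → ℝ → ℝ → ℝ) (he : ∀ k k', GP (e k k')) :
    ∃ d : PQ → ℝ, IsSupInf d ∧ ∀ z : PQ, ∀ v : ℝ, (∃ k, (∀ k', v ≤ e k k' z.1.1 z.1.2) ∧
      ∀ k', e k' k z.1.1 z.1.2 ≤ v) → d z = v := by
  obtain ⟨J, hJ⟩ : ∃ J, Fintype.card K = J + 1 := Nat.exists_eq_succ_of_ne_zero Fintype.card_ne_zero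
  let q : K ≃ Fin (J + 1) := Fintype.equivFinOfCardEq hJ
  refine ⟨fun z => ⨆ j : Fin (J + 1), ⨅ k : Fin (J + 1), e (q.symm j) (q.symm k) z.1.1 z.1.2,
    ⟨J, fun _ => J, fun j k z => e (q.symm j) (q.symm k) z.1.1 z.1.2, fun j k => (he _ _).isGenPoly, fun _ => rfl⟩, ?_⟩
  rintro z v ⟨k0, h1, h2⟩
  refine le_antisymm (ciSup_le fun j => ?_) ?_
  · refine (ciInf_le (Set.finite_range _).bddBelow (q k0)).trans ?_
    rw [Equiv.symm_apply_apply]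
    exact h2 _
  · refine le_ciSup_of_le (Set.finite_range _).bddAbove (q k0) (le_ciInf fun k => ?_)
    rw [Equiv.symm_apply_apply]
    exact h1 _

lemma ssum {κ : Type} [Fintype κ] (q : κ → ℝ) (h : ∀ p, 0 ≤ q p) (p : κ) : q p ≤ ∑ p, q p :=
  Finset.single_le_sum (fun p _ => h p) (Finset.mem_univ p)

lemma PIECE {l : ℕ} (g : Fin l → ℝ → ℝ → ℝ) (hg : ∀ a, GP (g a)) (f : Fin l → Fin l → YP)
    (hf : ∀ a b x y, 0 < x → 0 < y → g a x y - g b x y = (f a b).ev x y)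
    (hh : ℝ → ℝ → ℝ) (hcov : ∀ x y, 0 < x → 0 < y → ∃ a, hh x y = g a x y)
    (hgc : ∀ a x y, 0 < x → 0 < y → ContinuousAt (g a x) y)
    (hhc : ∀ x y, 0 < x → 0 < y → ContinuousAt (hh x) y)
    (X : Set ℝ) {K : Type} [Fintype K] [Nonempty K] (ty : ℝ → ℝ → K)
    (hty : ∀ x ∈ X, ∀ k, ∃ y, 0 < y ∧ ty x y = k) (idx : K → Fin l)
    (hidx : ∀ x ∈ X, ∀ y, 0 < y → hh x y = g (idx (ty x y)) x y)
    (cbf : Fin l → Fin l → K → CB) (hcb : ∀ a b, ∀ x ∈ X, ∀ y, 0 < y → cb (f a b) x y = cbf a b (ty x y)) :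
    ∃ d : PQ → ℝ, IsSupInf d ∧ ∀ z : PQ, z.1.1 ∈ X → d z = hh z.1.1 z.1.2 := by
  let SE : K → K → ℝ → ℝ → ℝ := fun k k' x y => ∑ p : Fin l × Fin l, EB (f p.1 p.2) (cbf p.1 p.2 k) (cbf p.1 p.2 k') x y
  let e : K → K → ℝ → ℝ → ℝ := fun k k' x y => g (idx k) x y - l * SE k k' x y
  obtain ⟨d, hd, hdv⟩ := supInf_of e fun k k' => (hg _).sub ((GP.sum _ _ fun p _ => EB_gp _ _ _).smul _)
  refine ⟨d, hd, fun z hz => hdv z _ ⟨ty z.1.1 z.1.2, fun k' => ?_, fun k => ?_⟩⟩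
  · have h1 := hidx _ hz _ z.2.2
    have h2 : SE (ty z.1.1 z.1.2) k' z.1.1 z.1.2 ≤ 0 := by
      refine Finset.sum_nonpos fun p _ => ?_
      rw [← hcb _ _ _ hz _ z.2.2]
      exact EB_nonpos _ _ _ z.2.2
    have h3 : (l : ℝ) * SE (ty z.1.1 z.1.2) k' z.1.1 z.1.2 ≤ 0 :=
      mul_nonpos_of_nonneg_of_nonpos (Nat.cast_nonneg _) h2
    simp only [e]
    linarith
  · obtain ⟨⟨x, y⟩, hx, hy⟩ := z
    simp only at hz hx hy ⊢
    obtain ⟨w, hw, hwk⟩ := hty x hz k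
    change g (idx k) x y - l * SE k (ty x y) x y ≤ hh x y
    have hpos : ∀ t ∈ uIcc w y, 0 < t := fun t ht => (lt_min hw hy).trans_le ht.1
    have hnn : ∀ p : Fin l × Fin l, 0 ≤ EB (f p.1 p.2) (cbf p.1 p.2 k) (cbf p.1 p.2 (ty x y)) x y := by
      intro p
      rw [← hcb _ _ _ hz _ hy]
      exact EB_nonneg _ _ _ hy
    have hb : ∀ a b, (∃ t ∈ uIcc w y, g a x t = g b x t) → |g a x y - g b x y| ≤ SE k (ty x y) x y := by
      rintro a b ⟨t, ht, hab⟩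
      have h0 : (f a b).ev x t = 0 := by
        rw [← hf a b x t hx (hpos t ht), hab, sub_self]
      have h1 := EB_bound (f a b) x hw hy ⟨t, ht, h0⟩
      rw [← hf a b x y hx hy, hcb a b x hz y hy, hcb a b x hz w hw, hwk] at h1
      refine h1.trans ?_
      exact ssum (fun p : Fin l × Fin l => EB (f p.1 p.2) (cbf p.1 p.2 k) (cbf p.1 p.2 (ty x y)) x y) hnn (a, b)
    have hSE : 0 ≤ SE k (ty x y) x y := Finset.sum_nonneg fun p _ => hnn p
    have hi : hh x w = g (idx k) x w := by rw [hidx x hz w hw, hwk]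
    have hjj := hidx x hz y hy
    have c1 : ContinuousOn (hh x) (uIcc w y) := fun t ht => (hhc x t hx (hpos t ht)).continuousWithinAt
    have c2 : ∀ a, ContinuousOn (g a x) (uIcc w y) := fun a t ht => (hgc a x t hx (hpos t ht)).continuousWithinAt
    have c3 : ∀ t ∈ uIcc w y, ∃ a, hh x t = g a x t := fun t ht => hcov x t hx (hpos t ht)
    generalize SE k (ty x y) x y = S at *
    have hfin := seg_bound (fun a => g a x) (hh x) c1 c2 c3 hSE hb hi hjj
    rw [hjj]
    linarith

end P5b

section P5c
open Filter Topology

lemma GLUE (P : Set ℝ → Prop) (hmono : ∀ I J, I ⊆ J → P J → P I) (hr : ∀ x, 0 ≤ x → ∃ ε > 0, P (Ioo x (x + ε)))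
    (hl : ∀ x, 0 < x → ∃ ε > 0, P (Ioo (max 0 (x - ε)) x)) {M : ℝ} (hM : 0 ≤ M) (hinf : P (Ioi M)) :
    ∃ (L : ℕ) (γ : ℕ → ℝ), γ 0 = 0 ∧ StrictMonoOn γ (Set.Iic L) ∧ ∀ p ≤ L, P (vstrip γ L p) := by
  let R : ℝ → Prop := fun u => ∃ (L : ℕ) (γ : ℕ → ℝ), γ 0 = 0 ∧ StrictMonoOn γ (Set.Iic L) ∧ γ L = u ∧
    ∀ p < L, P (Ioo (γ p) (γ (p + 1)))
  have hext : ∀ u v, R u → u < v → P (Ioo u v) → R v := by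
    rintro u v ⟨L, γ, h0, hm, hL, hp⟩ huv hP
    have hu : ∀ p, p ≤ L → Function.update γ (L + 1) v p = γ p := fun p hp =>
      Function.update_of_ne (by omega) _ _
    refine ⟨L + 1, Function.update γ (L + 1) v, by rw [hu 0 (by omega), h0], ?_, by simp, ?_⟩
    · intro a ha b hb hab
      simp only [Set.mem_Iic] at ha hb
      rcases Nat.lt_or_ge b (L + 1) with h | h
      · rw [hu a (by omega), hu b (by omega)]
        exact hm (by simp; omega) (by simp; omega) hab
      · have : b = L + 1 := by omega
        subst this
        rw [hu a (by omega), Function.update_self]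
        refine lt_of_le_of_lt ?_ huv
        rw [← hL]
        exact hm.monotoneOn (by simp; omega) (by simp) (by omega)
    · intro p hpL
      rcases Nat.lt_or_ge p L with h | h
      · rw [hu p (by omega), hu (p + 1) (by omega)]
        exact hp p h
      · have : p = L := by omega
        subst this
        rw [hu p le_rfl, Function.update_self, hL]
        exact hP
  have hR0 : R 0 := ⟨0, fun _ => 0, rfl, by intro a ha b hb hab; simp at ha hb; omega, rfl, by intro p hp; omega⟩
  let A : Set ℝ := {u | u ∈ Icc 0 M ∧ R u}
  have hA0 : (0:ℝ) ∈ A := ⟨⟨le_rfl, hM⟩, hR0⟩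
  have hAb : BddAbove A := ⟨M, fun u hu => hu.1.2⟩
  set c := sSup A with hc
  have hc0 : 0 ≤ c := le_csSup hAb hA0
  have hcM : c ≤ M := csSup_le ⟨0, hA0⟩ fun u hu => hu.1.2
  have hRc : R c := by
    rcases hc0.eq_or_lt with h | h
    · rw [← h]; exact hR0
    · obtain ⟨ε, hε, hP⟩ := hl c h
      obtain ⟨u, hu, hlt⟩ := exists_lt_of_lt_csSup ⟨0, hA0⟩ (show c - ε < sSup A by linarith)
      rcases (le_csSup hAb hu).eq_or_lt with h' | h'
      · rw [hc, ← h']; exact hu.2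
      · exact hext u c hu.2 h' (hmono _ _ (Ioo_subset_Ioo_left (max_le hu.1.1 hlt.le)) hP)
  have hcM' : c = M := by
    by_contra hne
    have hlt : c < M := lt_of_le_of_ne hcM hne
    obtain ⟨ε, hε, hP⟩ := hr c hc0
    have h1 : c < min (c + ε) M := lt_min (by linarith) hlt
    have h2 : R (min (c + ε) M) := hext c _ hRc h1 (hmono _ _ (Ioo_subset_Ioo_right (min_le_left _ _)) hP)
    have h3 : min (c + ε) M ∈ A := ⟨⟨hc0.trans h1.le, min_le_right _ _⟩, h2⟩
    exact absurd (le_csSup hAb h3) (not_le.2 h1)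
  rw [hcM'] at hRc
  obtain ⟨L, γ, h0, hm, hL, hp⟩ := hRc
  refine ⟨L, γ, h0, hm, fun p hpL => ?_⟩
  unfold vstrip
  split_ifs with h
  · rw [h, hL]; exact hinf
  · exact hp p (by omega)

lemma genpoly_yp {a : PQ → ℝ} (ha : IsGenPoly a) : ∃ f : YP, ∀ z : PQ, a z = f.ev z.1.1 z.1.2 := by
  obtain ⟨b, hb, h⟩ := GP.of_isGenPoly ha
  obtain ⟨f, hf⟩ := hb.yp
  exact ⟨f, fun z => (h z).trans (hf _ _ z.2.1 z.2.2)⟩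

def Agree (F : Set YP) (x y x' y' : ℝ) : Prop :=
  ∀ f ∈ F, SignType.sign (f.ev x y) = SignType.sign (f.ev x' y')

lemma sign_eq_pos {a b : ℝ} (h : SignType.sign a = SignType.sign b) (ha : 0 < a) : 0 < b := by
  rw [sign_pos ha] at h
  exact sign_eq_one_iff.1 h.symm

lemma sign_eq_z {a b : ℝ} (h : SignType.sign a = SignType.sign b) (ha : a = 0) : b = 0 := by
  rw [ha, sign_zero] at h
  exact sign_eq_zero_iff.1 h.symm

lemma basic_fin {S : Set PQ} (hS : IsBasicGSA S) : ∃ F : Set YP, F.Finite ∧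
    ∀ z z' : PQ, Agree F z.1.1 z.1.2 z'.1.1 z'.1.2 → z ∈ S → z' ∈ S := by
  obtain ⟨f, K, g, hf, hg, rfl⟩ := hS
  obtain ⟨f', hf'⟩ := genpoly_yp hf
  choose g' hg' using fun k => genpoly_yp (hg k)
  refine ⟨insert f' (Set.range g'), (Set.finite_range _).insert _, fun z z' hag hz => ?_⟩
  refine ⟨?_, fun k => ?_⟩
  · rw [hf']
    exact sign_eq_z (hag f' (Set.mem_insert _ _)) (by rw [← hf']; exact hz.1)
  · rw [hg']
    exact sign_eq_pos (hag (g' k) (Set.mem_insert_of_mem _ ⟨k, rfl⟩)) (by rw [← hg']; exact hz.2 k)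

lemma gsa_fin {S : Set PQ} (hS : IsGSA S) : ∃ F : Set YP, F.Finite ∧
    ∀ z z' : PQ, Agree F z.1.1 z.1.2 z'.1.1 z'.1.2 → z ∈ S → z' ∈ S := by
  obtain ⟨J, T, hT, rfl⟩ := hS
  choose F hF hag using fun j => basic_fin (hT j)
  refine ⟨⋃ j, F j, Set.finite_iUnion hF, fun z z' h hz => ?_⟩
  obtain ⟨j, hj⟩ := Set.mem_iUnion.1 hz
  exact Set.mem_iUnion.2 ⟨j, hag j z z' (fun f hf => h f (Set.mem_iUnion.2 ⟨j, hf⟩)) hj⟩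

lemma cb_fin (f : YP) : ∃ F : Set YP, F.Finite ∧
    ∀ x y x' y', 0 < y → 0 < y' → Agree F x y x' y' → cb f x y = cb f x' y' := by
  refine ⟨(fun l => YP.D^[l] f) '' Set.Iic f.S.card ∪ (fun l => (YP.D^[l] f.inv).inv) '' Set.Iic f.S.card,
    ((Set.finite_Iic _).image _).union ((Set.finite_Iic _).image _), fun x y x' y' hy hy' hag => ?_⟩
  refine Prod.ext ?_ ?_
  · funext l
    simp only [cb, cs]
    rcases le_or_gt l f.S.card with h | h
    · exact hag _ (Or.inl ⟨l, h, rfl⟩)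
    · have : (YP.D^[l] f).S.card = 0 := by rw [D_iter_card]; omega
      rw [YP.ev_empty _ this, YP.ev_empty _ this]
  · funext l
    simp only [cb, cs]
    rcases le_or_gt l f.S.card with h | h
    · have := hag _ (Or.inr ⟨l, h, rfl⟩)
      simp only at this
      rwa [YP.inv_ev _ _ hy, YP.inv_ev _ _ hy'] at this
    · have : (YP.D^[l] f.inv).S.card = 0 := by rw [D_iter_card, YP.inv_card]; omega
      rw [YP.ev_empty _ this, YP.ev_empty _ this]

lemma LOCAL (h : PQ → ℝ) (hc : Continuous h) (hpw : IsPiecewiseGenPoly h) :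
    ∃ (F : Set YP), F.Finite ∧ ∀ I : Set ℝ, IsPreconnected I → I.Nonempty → 
      (∀ x ∈ I, Good (Subtype.val : F → YP) x) →
      ∃ d : PQ → ℝ, IsSupInf d ∧ ∀ z : PQ, z.1.1 ∈ I → d z = h z := by
  classical
  obtain ⟨l, g, hg, _, hA, hcov⟩ := hpw
  choose u hu using fun a => genpoly_yp (hg a)
  choose f hf using fun a b => ((u a).gp.sub (u b).gp).yp
  choose F1 hF1 hag1 using fun a => gsa_fin (hA a)
  choose F2 hF2 hag2 using fun p : Fin l × Fin l => cb_fin (f p.1 p.2)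
  obtain ⟨F, hF, hsub, hcl⟩ := D_closure ((⋃ a, F1 a) ∪ ⋃ p, F2 p) ((Set.finite_iUnion hF1).union (Set.finite_iUnion hF2))
  refine ⟨F, hF, fun I hI hne hgood => ?_⟩
  have : Finite F := hF
  have : Fintype F := Fintype.ofFinite _
  let Fam : F → YP := Subtype.val
  have hD : ∀ i : F, (Fam i).S.Nonempty → ∃ j : F, Fam j = (Fam i).D := fun i hi => ⟨⟨_, hcl i i.2 hi⟩, rfl⟩
  obtain ⟨x0, hx0⟩ := hne
  have hpos : ∀ x ∈ I, 0 < x := fun x hx => (hgood x hx).pos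
  have hT : ∀ x ∈ I, TT Fam x = TT Fam x0 := fun x hx => T_const Fam hD hI hgood hx hx0
  have hagF : ∀ x y x' y', sg Fam x y = sg Fam x' y' → Agree F x y x' y' := fun x y x' y' h f hf =>
    congrFun h ⟨f, hf⟩
  have hag1' : ∀ x y x' y', sg Fam x y = sg Fam x' y' → ∀ a, Agree (F1 a) x y x' y' := fun x y x' y' h a f hf =>
    hagF x y x' y' h f (hsub (Or.inl (Set.mem_iUnion.2 ⟨a, hf⟩)))
  have hag2' : ∀ x y x' y', sg Fam x y = sg Fam x' y' → ∀ p, Agree (F2 p) x y x' y' := fun x y x' y' h a f hf =>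
    hagF x y x' y' h f (hsub (Or.inr (Set.mem_iUnion.2 ⟨a, hf⟩)))
  let K : Type := TT Fam x0
  have : Finite K := Set.toFinite _
  have : Fintype K := Fintype.ofFinite _
  have : Nonempty K := ⟨⟨sg Fam x0 1, 1, one_pos, rfl⟩⟩
  choose rep hrep0 hrep using fun k : K => k.2
  let ty : ℝ → ℝ → K := fun x y => if hm : sg Fam x y ∈ TT Fam x0 then ⟨_, hm⟩ else Classical.arbitrary _
  have hty : ∀ x ∈ I, ∀ y, 0 < y → (ty x y).1 = sg Fam x y := by
    intro x hx y hy
    have hm : sg Fam x y ∈ TT Fam x0 := by rw [← hT x hx]; exact ⟨y, hy, rfl⟩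
    simp only [ty, dif_pos hm]
  have hsame : ∀ x ∈ I, ∀ y, 0 < y → sg Fam x0 (rep (ty x y)) = sg Fam x y := fun x hx y hy => by
    rw [hrep, hty x hx y hy]
  have hx00 := hpos x0 hx0
  choose idx hidx using fun k : K => hcov ⟨(x0, rep k), hx00, hrep0 k⟩
  let hh : ℝ → ℝ → ℝ := fun x y => if hp : 0 < x ∧ 0 < y then h ⟨(x, y), hp⟩ else 0
  have hhe : ∀ z : PQ, hh z.1.1 z.1.2 = h z := fun z => by simp only [hh, dif_pos z.2]
  have hhe' : ∀ x y (hx : 0 < x) (hy : 0 < y), hh x y = h ⟨(x, y), hx, hy⟩ := fun x y hx hy => hhe ⟨(x, y), hx, hy⟩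
  have hcont : ∀ x y, 0 < x → 0 < y → ContinuousAt (hh x) y := by
    intro x y hx hy
    have h1 : ContinuousOn (hh x) (Ioi 0) := by
      rw [continuousOn_iff_continuous_domRestrict]
      have : (Ioi (0:ℝ)).domRestrict (hh x) = fun t : Ioi (0:ℝ) => h ⟨(x, t.1), hx, t.2⟩ := by
        funext t
        exact hhe' x t.1 hx t.2
      rw [this]
      exact hc.comp (by fun_prop)
    exact h1.continuousAt (Ioi_mem_nhds hy)
  obtain ⟨d, hd, hdz⟩ := PIECE (fun a => (u a).ev) (fun a => (u a).gp) f hf hh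
    (fun x y hx hy => by
      obtain ⟨a, ha⟩ := hcov ⟨(x, y), hx, hy⟩
      exact ⟨a, by rw [hhe' x y hx hy, ha, hu]⟩)
    (fun a x y hx hy => (u a).cont_y hx hy) hcont I ty
    (fun x hx k => by
      have hk := (Set.ext_iff.1 (hT x hx) k.1).2 k.2
      obtain ⟨y, hy, hk⟩ := hk
      exact ⟨y, hy, Subtype.ext (by rw [hty x hx y hy, hk])⟩)
    idx
    (fun x hx y hy => by
      have hx' := hpos x hx
      rw [hhe' x y hx' hy]
      have := hag1 (idx (ty x y)) ⟨(x0, rep (ty x y)), hx00, hrep0 _⟩ ⟨(x, y), hx', hy⟩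
        (hag1' _ _ _ _ (hsame x hx y hy) _) (hidx _)
      exact Eq.trans this (hu _ _))
    (fun a b k => cb (f a b) x0 (rep k))
    (fun a b x hx y hy =>
      (hag2 (a, b) x0 (rep (ty x y)) x y (hrep0 _) hy (hag2' _ _ _ _ (hsame x hx y hy) (a, b))).symm)
  exact ⟨d, hd, fun z hz => (hdz z hz).trans (hhe z)⟩

theorem main_thm (h : PQ → ℝ) (hc : Continuous h) (hpw : IsPiecewiseGenPoly h) :
    ∃ (L : ℕ) (γ : ℕ → ℝ) (d : ℕ → PQ → ℝ),
      γ 0 = 0 ∧ StrictMonoOn γ (Set.Iic L) ∧ (∀ p ≤ L, IsSupInf (d p)) ∧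
      ∀ p ≤ L, ∀ z : PQ, z.1.1 ∈ vstrip γ L p → d p z = h z := by
  obtain ⟨F, hF, hloc⟩ := LOCAL h hc hpw
  have : Finite F := hF
  let Fam : F → YP := Subtype.val
  let P : Set ℝ → Prop := fun I => ∃ d : PQ → ℝ, IsSupInf d ∧ ∀ z : PQ, z.1.1 ∈ I → d z = h z
  have hmono : ∀ I J, I ⊆ J → P J → P I := by
    rintro I J hIJ ⟨d, hd, hz⟩
    exact ⟨d, hd, fun z hzI => hz z (hIJ hzI)⟩
  obtain ⟨ε0, hε0, hg0⟩ := good_coord Fam coord_id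
  obtain ⟨ε1, hε1, hg1⟩ := good_coord Fam coord_inv
  obtain ⟨L, γ, h0, hm, hp⟩ := GLUE P hmono
    (by
      intro x hx
      rcases hx.eq_or_lt with rfl | hx
      · refine ⟨ε0, hε0, hloc _ isPreconnected_Ioo ⟨ε0 / 2, by linarith, by linarith⟩ fun t ht => ?_⟩
        exact hg0 t ht.1 ht.1 (by linarith [ht.2])
      · obtain ⟨ε, hε, hg⟩ := good_coord Fam (coord_right hx)
        refine ⟨ε, hε, hloc _ isPreconnected_Ioo ⟨x + ε / 2, by linarith, by linarith⟩ fun t ht => ?_⟩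
        exact hg t (hx.trans ht.1) (by linarith [ht.1]) (by linarith [ht.2]))
    (by
      intro x hx
      obtain ⟨ε, hε, hg⟩ := good_coord Fam (coord_left hx)
      refine ⟨ε, hε, hloc _ isPreconnected_Ioo (nonempty_Ioo.2 (max_lt hx (by linarith))) fun t ht => ?_⟩
      obtain ⟨h1, h2⟩ := max_lt_iff.1 ht.1
      exact hg t h1 (by linarith [ht.2]) (by linarith))
    (M := ε1⁻¹) (inv_pos.2 hε1).le
    (by
      refine hloc _ isPreconnected_Ioi nonempty_Ioi fun t ht => ?_
      have ht' : ε1⁻¹ < t := ht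
      have ht0 : 0 < t := (inv_pos.2 hε1).trans ht'
      exact hg1 t ht0 (inv_pos.2 ht0) (inv_lt_of_inv_lt₀ hε1 ht'))
  choose! d hd hdz using hp
  exact ⟨L, γ, d, h0, hm, hd, hdz⟩

end P5c

/-- One-variable methods: a continuous piecewise generalized polynomial function
agrees, on each vertical half-strip `H_p = (γ p, γ (p+1)) × (0,∞)` of a suitable
finite subdivision of the `x`-axis, with a sup of infs of finitely many
generalized polynomial functions. -/
theorem supInf_on_vertical_halfstrips (h : PQ → ℝ)
    (hc : Continuous h) (hpw : IsPiecewiseGenPoly h) :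
    ∃ (L : ℕ) (γ : ℕ → ℝ) (d : ℕ → PQ → ℝ),
      γ 0 = 0 ∧ StrictMonoOn γ (Set.Iic L) ∧
      (∀ p ≤ L, IsSupInf (d p)) ∧
      (∀ p ≤ L, ∀ z : PQ, z.1.1 ∈ vstrip γ L p → d p z = h z) := by
  exact main_thm h hc hpw
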